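/- arXiv:1506.06200 — 3 statements merged into one kernel-verified Lean document; each statement's English description precedes it below -/
import Mathlib

section
/- Let X and Y be varieties over a field k of dimension at most n such that [X] = [Y] in K_0(V_k^{(n,n-1)}). Then X and Y have the same number of n-dimensional irreducible components, and there is a bijection between the n-dimensional irreducible components of X and those of Y under which corresponding components are birationally isomorphic. -/
open AlgebraicGeometry CategoryTheory CategoryTheory.Limits

noncomputable section

universe u

/-- A variety over a field `k`: a reduced separated scheme of finite type over `Spec k`. -/
structure Variety (k : Type u) [Field k] : Type (u + 1) where
  /-- the underlying scheme -/
  toScheme : Scheme.{u}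
  /-- the structure morphism to `Spec k` -/
  str : toScheme ⟶ Spec (CommRingCat.of k)
  reduced : IsReduced toScheme
  separated : IsSeparated str
  locallyOfFiniteType : LocallyOfFiniteType str
  quasiCompact : QuasiCompact str

namespace Variety

variable {k : Type u} [Field k]

/-- The dimension of a variety, i.e. the Krull dimension of its underlying space. -/
def dim (V : Variety k) : WithBot ℕ∞ := topologicalKrullDim V.toScheme

/-- `W` together with (implicitly) its two projections is a product of `X` and `Y`
over `k`, i.e. `W ≅ X ×ₖ Y`. -/
def IsProductOf (W X Y : Variety k) : Prop :=
  ∃ e : W.toScheme ≅ Limits.pullback X.str Y.str,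
    e.hom ≫ Limits.pullback.fst X.str Y.str ≫ X.str = W.str

/-- `A` is the affine line `𝔸¹` over `k`. -/
def IsAffLine (A : Variety k) : Prop :=
  ∃ e : A.toScheme ≅ Spec (CommRingCat.of (Polynomial k)),
    e.hom ≫ Spec.map (CommRingCat.ofHom (algebraMap k (Polynomial k))) = A.str

/-- `A` is affine `r`-space `𝔸^r` over `k`. -/
def IsAffSpace (r : ℕ) (A : Variety k) : Prop :=
  ∃ e : A.toScheme ≅ Spec (CommRingCat.of (MvPolynomial (Fin r) k)),
    e.hom ≫ Spec.map (CommRingCat.ofHom (algebraMap k (MvPolynomial (Fin r) k))) = A.str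

/-- A variety is smooth if its structure morphism is smooth. -/
def IsSmoothVar (V : Variety k) : Prop := IsSmooth V.str

/-- Projective `N`-space over `k`, as the `Proj` of a polynomial ring. -/
def ProjSpace (k : Type u) [Field k] (N : ℕ) : Scheme.{u} :=
  letI := MvPolynomial.gradedAlgebra (σ := Fin (N + 1)) (R := k)
  Proj (MvPolynomial.homogeneousSubmodule (Fin (N + 1)) k)

/-- The structure morphism of projective `N`-space over `k`. -/
def ProjSpace.str (k : Type u) [Field k] (N : ℕ) :
    ProjSpace k N ⟶ Spec (CommRingCat.of k) :=
  letI := MvPolynomial.gradedAlgebra (σ := Fin (N + 1)) (R := k)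
  Proj.toSpecZero (MvPolynomial.homogeneousSubmodule (Fin (N + 1)) k) ≫
    Spec.map (CommRingCat.ofHom
      (algebraMap k (MvPolynomial.homogeneousSubmodule (Fin (N + 1)) k 0)))

/-- `P` is projective `N`-space over `k`, as a variety. -/
def IsProjSpaceVar (N : ℕ) (P : Variety k) : Prop :=
  ∃ e : P.toScheme ≅ ProjSpace k N, e.hom ≫ ProjSpace.str k N = P.str

/-- A variety is projective if it admits a closed immersion into some `ℙ^N` over `k`. -/
def IsProjectiveVar (V : Variety k) : Prop :=
  ∃ (N : ℕ) (i : V.toScheme ⟶ ProjSpace k N),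
    IsClosedImmersion i ∧ i ≫ ProjSpace.str k N = V.str

/-- `X` and `Y` are birationally isomorphic over `k`:
some dense open subvarieties are isomorphic over `k`. -/
def BirEquiv (X Y : Variety k) : Prop :=
  ∃ (U : X.toScheme.Opens) (V : Y.toScheme.Opens),
    Dense (U : Set X.toScheme) ∧ Dense (V : Set Y.toScheme) ∧
    ∃ e : U.toScheme ≅ V.toScheme, e.hom ≫ V.ι ≫ Y.str = U.ι ≫ X.str

/-- `X` and `Y` are stably birational: `X × 𝔸^r` and `Y × 𝔸^r` are birationally
isomorphic for some `r ≥ 0`. -/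
def StablyBirational (X Y : Variety k) : Prop :=
  ∃ (r : ℕ) (A XA YA : Variety k),
    IsAffSpace r A ∧ IsProductOf XA X A ∧ IsProductOf YA Y A ∧ BirEquiv XA YA

/-- `X` and `Y` are piecewise isomorphic: they admit finite partitions into locally
closed subvarieties which are isomorphic over `k` piece by piece. -/
def PiecewiseIso (X Y : Variety k) : Prop :=
  ∃ (m : ℕ) (P Q : Fin m → Variety k)
    (f : ∀ i, (P i).toScheme ⟶ X.toScheme) (g : ∀ i, (Q i).toScheme ⟶ Y.toScheme),
    (∀ i, IsImmersion (f i)) ∧ (∀ i, IsImmersion (g i)) ∧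
    (∀ i, f i ≫ X.str = (P i).str) ∧ (∀ i, g i ≫ Y.str = (Q i).str) ∧
    (∀ i j, i ≠ j → Disjoint (Set.range (f i).base) (Set.range (f j).base)) ∧
    (∀ i j, i ≠ j → Disjoint (Set.range (g i).base) (Set.range (g j).base)) ∧
    (⋃ i, Set.range (f i).base) = Set.univ ∧
    (⋃ i, Set.range (g i).base) = Set.univ ∧
    ∀ i, ∃ e : (P i).toScheme ≅ (Q i).toScheme, e.hom ≫ (Q i).str = (P i).str

/-- The set of generators of the scissor-type relations among varieties of the class `P`:
`[X] = [X']` for `X ≅ X'` over `k`, and `[X] = [Y] + [U]` whenever `Y` is a closed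
subvariety of `X` and `U` is its open complement. -/
def cutRel (P : Variety k → Prop) : Set (FreeAbelianGroup {V : Variety k // P V}) :=
  {a | (∃ X Y : {V : Variety k // P V},
          (∃ e : X.1.toScheme ≅ Y.1.toScheme, e.hom ≫ Y.1.str = X.1.str) ∧
          a = FreeAbelianGroup.of X - FreeAbelianGroup.of Y) ∨
       (∃ (X Y U : {V : Variety k // P V}) (i : Y.1.toScheme ⟶ X.1.toScheme)
          (j : U.1.toScheme ⟶ X.1.toScheme),
          IsClosedImmersion i ∧ IsOpenImmersion j ∧
          i ≫ X.1.str = Y.1.str ∧ j ≫ X.1.str = U.1.str ∧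
          Set.range j.base = (Set.range i.base)ᶜ ∧
          a = FreeAbelianGroup.of X - FreeAbelianGroup.of Y - FreeAbelianGroup.of U)}

/-- The Grothendieck group of the class of varieties satisfying `P`: the free abelian
group on (isomorphism classes of) varieties satisfying `P`, modulo the relations
`[X] = [Y] + [X ∖ Y]` for closed subvarieties `Y` of `X`. -/
def K0 (k : Type u) [Field k] (P : Variety k → Prop) : Type (u + 1) :=
  FreeAbelianGroup {V : Variety k // P V} ⧸ AddSubgroup.closure (cutRel P)

instance (P : Variety k → Prop) : AddCommGroup (K0 k P) :=
  QuotientAddGroup.Quotient.addCommGroup _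

/-- The class of a variety in the Grothendieck group. -/
def K0.cls {P : Variety k → Prop} (V : Variety k) (hV : P V) : K0 k P :=
  QuotientAddGroup.mk (FreeAbelianGroup.of ⟨V, hV⟩)

/-- `K_0(V_k^{(n)})`: the Grothendieck group of varieties of dimension at most `n`. -/
abbrev K0le (k : Type u) [Field k] (n : ℕ) : Type (u + 1) :=
  K0 k (fun V => V.dim ≤ (n : WithBot ℕ∞))

/-- `K_0[V_k]` (as an abelian group): the Grothendieck group of all varieties over `k`. -/
abbrev K0Var (k : Type u) [Field k] : Type (u + 1) := K0 k (fun _ => True)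

/-- The class of a variety in `K_0[V_k]`. -/
def K0Var.cls (V : Variety k) : K0Var k := K0.cls V trivial

/-- `K_0(V_k^{(n,n-1)})`: the Grothendieck group of varieties of dimension at most `n`,
where moreover the class of every variety of dimension `< n` is set to `0`. -/
def K0graded (k : Type u) [Field k] (n : ℕ) : Type (u + 1) :=
  FreeAbelianGroup {V : Variety k // V.dim ≤ (n : WithBot ℕ∞)} ⧸
    AddSubgroup.closure (cutRel (fun V => V.dim ≤ (n : WithBot ℕ∞)) ∪
      {a | ∃ X : {V : Variety k // V.dim ≤ (n : WithBot ℕ∞)},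
        X.1.dim < (n : WithBot ℕ∞) ∧ a = FreeAbelianGroup.of X})

instance (n : ℕ) : AddCommGroup (K0graded k n) :=
  QuotientAddGroup.Quotient.addCommGroup _

/-- The class of a variety in `K_0(V_k^{(n,n-1)})`. -/
def K0graded.cls (n : ℕ) (V : Variety k) (hV : V.dim ≤ (n : WithBot ℕ∞)) : K0graded k n :=
  QuotientAddGroup.mk (FreeAbelianGroup.of ⟨V, hV⟩)

/-- `x ∈ K_0(V_k^{(b)})` lies in the image of multiplication by `L = [𝔸¹]`, viewed as the
map `K_0(V_k^{(a)}) → K_0(V_k^{(b)})` sending `[Z]` to `[Z × 𝔸¹]`. -/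
def InMulLImage (a b : ℕ) (x : K0le k b) : Prop :=
  ∃ (m : ℕ) (c : Fin m → ℤ) (Z W : Fin m → Variety k)
    (_ : ∀ i, (Z i).dim ≤ (a : WithBot ℕ∞)) (hW : ∀ i, (W i).dim ≤ (b : WithBot ℕ∞)),
    (∀ i, ∃ A : Variety k, IsAffLine A ∧ IsProductOf (W i) (Z i) A) ∧
    x = ∑ i, c i • K0.cls (W i) (hW i)

/-- `L · χ = 0` in `K_0[V_k]`: there is a representation `χ = ∑ cᵢ [Zᵢ]` with
`∑ cᵢ [Zᵢ × 𝔸¹] = 0`. -/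
def MulLZero (χ : K0Var k) : Prop :=
  ∃ (m : ℕ) (c : Fin m → ℤ) (Z W : Fin m → Variety k),
    (∀ i, ∃ A : Variety k, IsAffLine A ∧ IsProductOf (W i) (Z i) A) ∧
    χ = ∑ i, c i • K0Var.cls (Z i) ∧
    (0 : K0Var k) = ∑ i, c i • K0Var.cls (W i)

/-- The subgroup of `K_0[V_k]` of multiples of `L`, i.e. the ideal generated by `L`
viewed as an additive subgroup. -/
def LMultiples (k : Type u) [Field k] : AddSubgroup (K0Var k) :=
  AddSubgroup.closure
    {y | ∃ (m : ℕ) (c : Fin m → ℤ) (Z W : Fin m → Variety k),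
      (∀ i, ∃ A : Variety k, IsAffLine A ∧ IsProductOf (W i) (Z i) A) ∧
      y = ∑ i, c i • K0Var.cls (W i)}

/-- `Z` realizes the closed complement `X ∖ U` of the open `U ⊆ X` as a variety. -/
def IsComplementOf (Z X : Variety k) (U : X.toScheme.Opens) : Prop :=
  ∃ i : Z.toScheme ⟶ X.toScheme, IsClosedImmersion i ∧ i ≫ X.str = Z.str ∧
    Set.range i.base = (U : Set X.toScheme)ᶜ

/-- The birational isomorphism between `n`-dimensional varieties `X ⇢ Y` represented by
an isomorphism `U → V` of open subvarieties is convenient: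
`[X ∖ U] - [Y ∖ V]` lies in the image of `·L : K_0(V_k^{(n-2)}) → K_0(V_k^{(n-1)})`. -/
def ConvenientRep (n : ℕ) (X Y : Variety k) (U : X.toScheme.Opens)
    (V : Y.toScheme.Opens) : Prop :=
  ∀ (ZX ZY : Variety k) (hZX : ZX.dim ≤ ((n - 1 : ℕ) : WithBot ℕ∞))
    (hZY : ZY.dim ≤ ((n - 1 : ℕ) : WithBot ℕ∞)),
    IsComplementOf ZX X U → IsComplementOf ZY Y V →
    InMulLImage (n - 2) (n - 1) (K0.cls ZX hZX - K0.cls ZY hZY)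

/-- A field `k` is convenient if every birational isomorphism between smooth projective
varieties over `k` is convenient. -/
def ConvenientField (k : Type u) [Field k] : Prop :=
  ∀ (n : ℕ) (X Y : Variety k), IsSmoothVar X → IsSmoothVar Y →
    IsProjectiveVar X → IsProjectiveVar Y →
    IrreducibleSpace X.toScheme → IrreducibleSpace Y.toScheme →
    X.dim = (n : WithBot ℕ∞) → Y.dim = (n : WithBot ℕ∞) →
    ∀ (U : X.toScheme.Opens) (V : Y.toScheme.Opens),
      Dense (U : Set X.toScheme) → Dense (V : Set Y.toScheme) →
      ∀ e : U.toScheme ≅ V.toScheme, e.hom ≫ V.ι ≫ Y.str = U.ι ≫ X.str →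
      ConvenientRep n X Y U V

end Variety
namespace Variety

variable {k : Type u} [Field k]

/-- The type of birational isomorphism classes of irreducible `n`-dimensional
varieties over `k` (the set `B_n`). -/
def BirClass (k : Type u) [Field k] (n : ℕ) : Type (u + 1) :=
  Quot (fun X Y : {V : Variety k // IrreducibleSpace V.toScheme ∧
    V.dim = (n : WithBot ℕ∞)} => BirEquiv X.1 Y.1)

/-- The type of stable birational isomorphism classes of irreducible varieties
over `k` (the set `SB`). -/
def StableBirClass (k : Type u) [Field k] : Type (u + 1) :=
  Quot (fun X Y : {V : Variety k // IrreducibleSpace V.toScheme} =>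
    StablyBirational X.1 Y.1)

/-- The family of varieties `C` together with the closed immersions `f i` realizes
exactly the `n`-dimensional irreducible components of `X`, each exactly once. -/
def RealizesComponents (n : ℕ) (X : Variety k) (m : ℕ)
    (C : Fin m → Variety k) (f : ∀ i, (C i).toScheme ⟶ X.toScheme) : Prop :=
  (∀ i, IsClosedImmersion (f i)) ∧ (∀ i, f i ≫ X.str = (C i).str) ∧
  Function.Injective (fun i => Set.range (f i).base) ∧
  (Set.range fun i => Set.range (f i).base) =
    {S | S ∈ irreducibleComponents X.toScheme ∧
      topologicalKrullDim S = (n : WithBot ℕ∞)}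

/-- `p : E ⟶ Z` is a Zariski-locally trivial `ℙ^ℓ`-bundle: every point of `Z` has an
open neighbourhood `W` such that `p⁻¹(W)` is isomorphic over `W` to `W × ℙ^ℓ`. -/
def IsProjBundle (ℓ : ℕ) {E Z : Variety k} (p : E.toScheme ⟶ Z.toScheme) : Prop :=
  ∀ z : Z.toScheme, ∃ W : Z.toScheme.Opens, z ∈ W ∧
    ∃ e : (p ⁻¹ᵁ W).toScheme ≅ Limits.pullback (W.ι ≫ Z.str) (ProjSpace.str k ℓ),
      e.hom ≫ Limits.pullback.fst (W.ι ≫ Z.str) (ProjSpace.str k ℓ) = p ∣_ W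

/-- `X` (of dimension `d`) has stable dimensional complexity `m`: `m` is the minimal
integer such that `X` is stably birational to `X' × 𝔸^(d-m)` for some variety `X'` of
dimension `m`. -/
def HasStableDimComplexity (X : Variety k) (d m : ℕ) : Prop :=
  (∃ X' A P : Variety k, X'.dim = (m : WithBot ℕ∞) ∧ IsAffSpace (d - m) A ∧
      IsProductOf P X' A ∧ StablyBirational X P) ∧
  ∀ j < m, ¬ ∃ X' A P : Variety k, X'.dim = (j : WithBot ℕ∞) ∧ IsAffSpace (d - j) A ∧
      IsProductOf P X' A ∧ StablyBirational X P

/-- Generators of the covering relations among smooth varieties: `[X] = ∑ᵢ [Xᵢ]`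
whenever `{Xᵢ → X}` is a finite family of locally closed embeddings of smooth
varieties with pairwise disjoint images whose union is all of `X`. -/
def smCutRel (k : Type u) [Field k] :
    Set (FreeAbelianGroup {V : Variety k // IsSmoothVar V}) :=
  {a | ∃ (X : {V : Variety k // IsSmoothVar V}) (m : ℕ)
        (P : Fin m → {V : Variety k // IsSmoothVar V})
        (f : ∀ i, (P i).1.toScheme ⟶ X.1.toScheme),
        (∀ i, IsImmersion (f i)) ∧ (∀ i, f i ≫ X.1.str = (P i).1.str) ∧
        (∀ i j, i ≠ j → Disjoint (Set.range (f i).base) (Set.range (f j).base)) ∧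
        (⋃ i, Set.range (f i).base) = Set.univ ∧
        a = FreeAbelianGroup.of X - ∑ i, FreeAbelianGroup.of (P i)}

/-- `K_0(V_k^{sm})`: the Grothendieck group of smooth varieties over `k`, with the
covering relations. -/
def K0sm (k : Type u) [Field k] : Type (u + 1) :=
  FreeAbelianGroup {V : Variety k // IsSmoothVar V} ⧸ AddSubgroup.closure (smCutRel k)

instance : AddCommGroup (K0sm k) := QuotientAddGroup.Quotient.addCommGroup _

/-- The class of a smooth variety in `K_0(V_k^{sm})`. -/
def K0sm.cls (V : Variety k) (hV : IsSmoothVar V) : K0sm k :=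
  QuotientAddGroup.mk (FreeAbelianGroup.of ⟨V, hV⟩)

end Variety
namespace Variety

variable {k : Type u} [Field k]

/-- The class of a variety in `K_0(V_k^{(n)})`. -/
def K0le.cls (n : ℕ) (V : Variety k) (hV : V.dim ≤ (n : WithBot ℕ∞)) : K0le k n :=
  K0.cls V hV

end Variety

open Variety

/-!
Two pointed varieties have the same germ if some open neighbourhoods of the base points are
isomorphic over `k`. Fix a germ `c` and count the points of a variety whose closure has dimension
`n` and at which the variety has germ `c`. For varieties of dimension at most `n` these points are
generic points of irreducible components, so there are finitely many of them, and the count is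
additive when `X` is cut into a closed subvariety `Y` and its complement `U`. Indeed, passing to an
open subvariety changes neither germs nor dimensions of points, the latter because the dimension of
an integral `k`-algebra of finite type is its transcendence degree, which a localization does not
decrease. Passing to `Y` preserves the dimension of a point; and at the generic point of a component
of `X` contained in `Y`, the reduced schemes `X` and `Y` agree on a neighbourhood.

Hence the counts are determined by the class of `X` in `K_0(V_k^{(n,n-1)})`. The count for `c` is
the number of `n`-dimensional components with generic germ `c`, and irreducible varieties sharing a
germ are birationally isomorphic, so matching the components germ by germ gives the bijection.
-/

section KrullDimension

theorem ringKrullDim_le_of_isIntegral (R S : Type*) [CommRing R] [CommRing S] [Algebra R S]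
    [Algebra.IsIntegral R S] : ringKrullDim S ≤ ringKrullDim R :=
  Order.krullDim_le_of_strictMono (PrimeSpectrum.comap (algebraMap R S)) fun P Q (hPQ : _ < _) ↦
    Ideal.IsIntegral.comap_lt_comap (I := P.asIdeal) (J := Q.asIdeal) hPQ

theorem ringKrullDim_eq_of_isIntegral (R S : Type*) [CommRing R] [CommRing S] [Algebra R S]
    [Algebra.IsIntegral R S] [FaithfulSMul R S] : ringKrullDim S = ringKrullDim R := by
  refine (ringKrullDim_le_of_isIntegral R S).antisymm (iSup_le fun l ↦ ?_)
  obtain ⟨P, _, _⟩ := (Ideal.nonempty_primesOver (S := S) l.head.asIdeal).some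
  obtain ⟨L, hL, -, -⟩ := Ideal.exists_ltSeries_of_hasGoingUp (S := S) l P
  exact hL ▸ Order.LTSeries.length_le_krullDim L

theorem ringKrullDim_eq_trdeg (k A : Type*) [Field k] [CommRing A] [IsDomain A] [Algebra k A]
    [Algebra.FiniteType k A] :
    ringKrullDim A = (Cardinal.toENat (Algebra.trdeg k A) : WithBot ℕ∞) := by
  obtain ⟨s, φ, hφ, hφint⟩ := exists_integral_inj_algHom_of_fg k A
  let := φ.toRingHom.toAlgebra
  have : Algebra.IsIntegral (MvPolynomial (Fin s) k) A := ⟨hφint⟩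
  have : IsScalarTower k (MvPolynomial (Fin s) k) A := .of_algebraMap_eq' φ.comp_algebraMap.symm
  have : FaithfulSMul (MvPolynomial (Fin s) k) A :=
    (faithfulSMul_iff_algebraMap_injective _ _).mpr hφ
  have hdim : ringKrullDim A = s := by
    simp [ringKrullDim_eq_of_isIntegral (MvPolynomial (Fin s) k) A,
      MvPolynomial.ringKrullDim_of_isNoetherianRing]
  have htrdeg : Algebra.trdeg k A = s := by
    simpa [trdeg_eq_zero] using (lift_trdeg_add_eq k (MvPolynomial (Fin s) k) A).symm
  rw [hdim, htrdeg, map_natCast, WithBot.coe_natCast]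

theorem ringKrullDim_le_of_injective_algHom {k A B : Type*} [Field k] [CommRing A] [IsDomain A]
    [Algebra k A] [Algebra.FiniteType k A] [CommRing B] [IsDomain B] [Algebra k B]
    [Algebra.FiniteType k B] (φ : A →ₐ[k] B) (hφ : Function.Injective φ) :
    ringKrullDim A ≤ ringKrullDim B := by
  rw [ringKrullDim_eq_trdeg k A, ringKrullDim_eq_trdeg k B, WithBot.coe_le_coe]
  simpa using OrderHomClass.mono Cardinal.toENat (lift_trdeg_le_of_injective φ hφ)

theorem ringKrullDim_le_ringKrullDim_localizationAway (k : Type*) {A : Type*} [Field k]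
    [CommRing A] [IsDomain A] [Algebra k A] [Algebra.FiniteType k A] {f : A} (hf : f ≠ 0) :
    ringKrullDim A ≤ ringKrullDim (Localization.Away f) := by
  have hle : Submonoid.powers f ≤ nonZeroDivisors A :=
    powers_le_nonZeroDivisors_of_noZeroDivisors hf
  have : IsDomain (Localization.Away f) := IsLocalization.isDomain_localization hle
  have : Algebra.FiniteType A (Localization.Away f) :=
    IsLocalization.finiteType_of_monoid_fg (.powers f) _
  have : Algebra.FiniteType k (Localization.Away f) := .trans (S := A) ‹_› ‹_›
  exact ringKrullDim_le_of_injective_algHom (IsScalarTower.toAlgHom k A (Localization.Away f))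
    (IsLocalization.injective _ hle)

end KrullDimension

section TopologicalDimension

open Topology TopologicalSpace

variable {X Y : Type*} [TopologicalSpace X] [TopologicalSpace Y]

theorem topologicalKrullDim_mono {s t : Set X} (hst : s ⊆ t) :
    topologicalKrullDim s ≤ topologicalKrullDim t :=
  (IsEmbedding.inclusion hst).isInducing.topologicalKrullDim_le

theorem topologicalKrullDim_image {f : X → Y} (hf : IsEmbedding f) (s : Set X) :
    topologicalKrullDim (f '' s) = topologicalKrullDim s :=
  ((hf.homeomorphImage s).isHomeomorph.topologicalKrullDim_eq).symm

theorem topologicalKrullDim_range {f : X → Y} (hf : IsEmbedding f) :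
    topologicalKrullDim (Set.range f) = topologicalKrullDim X :=
  (hf.toHomeomorph.isHomeomorph.topologicalKrullDim_eq).symm

theorem topologicalKrullDim_le_of_forall_exists_isOpen {c : WithBot ℕ∞}
    (h : ∀ x : X, ∃ O : Set X, IsOpen O ∧ x ∈ O ∧ topologicalKrullDim O ≤ c) :
    topologicalKrullDim X ≤ c := by
  rw [topologicalKrullDim, Order.krullDim_eq_iSup_coheight]
  refine iSup_le fun Z ↦ ?_
  obtain ⟨x, hxZ⟩ := Z.isIrreducible.nonempty
  obtain ⟨O, hO, hxO, hOc⟩ := h x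
  let e := IrreducibleCloseds.orderIsoOfIsOpenEmbedding _ hO.isOpenEmbedding_subtypeVal
  let Z' : {W : IrreducibleCloseds X | (Subtype.val ⁻¹' W : Set O).Nonempty} := ⟨Z, ⟨x, hxO⟩, hxZ⟩
  have hZ : IrreducibleCloseds.map _ continuous_subtype_val (e.symm Z') = Z :=
    congrArg Subtype.val (e.apply_symm_apply Z')
  rw [← hZ, hO.isOpenEmbedding_subtypeVal.coheight_map]
  exact (Order.coheight_le_krullDim _).trans hOc

theorem topologicalKrullDim_le_height (S : IrreducibleCloseds X) :
    topologicalKrullDim S ≤ Order.height S := by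
  rw [Order.height_eq_krullDim_Iic]
  let φ (Z : IrreducibleCloseds S) : Set.Iic S :=
    ⟨Z.map Subtype.val continuous_subtype_val,
      closure_minimal (Subtype.coe_image_subset _ _) S.isClosed⟩
  exact Order.krullDim_le_of_strictMono φ fun _ _ h ↦
    IrreducibleCloseds.map_strictMono_of_isInducing IsInducing.subtypeVal h

theorem mem_irreducibleComponents_of_topologicalKrullDim_le {s : Set X} (hs : IsIrreducible s)
    (hs' : IsClosed s) (hfin : topologicalKrullDim s < ⊤)
    (hle : topologicalKrullDim X ≤ topologicalKrullDim s) : s ∈ irreducibleComponents X := by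
  refine ⟨hs, fun t ht hst ↦ by_contra fun hts ↦ ?_⟩
  let S : IrreducibleCloseds X := ⟨s, hs, hs'⟩
  let T : IrreducibleCloseds X := ⟨closure t, ht.closure, isClosed_closure⟩
  have hST : S < T := ⟨hst.trans subset_closure, fun h ↦ hts (subset_closure.trans h)⟩
  have hSfin : Order.height S < ⊤ := WithBot.coe_lt_coe.mp
    (((Order.height_le_krullDim S).trans hle).trans_lt hfin)
  have hTS : Order.height T ≤ Order.height S := WithBot.coe_le_coe.mp
    (((Order.height_le_krullDim T).trans hle).trans (topologicalKrullDim_le_height S))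
  exact (Order.height_strictMono hST hSfin).not_ge hTS

theorem irreducibleSpace_of_isIrreducible_range {f : X → Y} (hf : IsEmbedding f)
    (h : IsIrreducible (Set.range f)) : IrreducibleSpace X :=
  have := Subtype.irreducibleSpace h
  have : Nonempty X := Set.range_nonempty_iff_nonempty.mp h.nonempty
  hf.toHomeomorph.isOpenEmbedding.irreducibleSpace

theorem exists_isOpen_mem_subset_closure_singleton [NoetherianSpace X] {x : X}
    (hx : closure {x} ∈ irreducibleComponents X) :
    ∃ O : Set X, IsOpen O ∧ x ∈ O ∧ O ⊆ closure {x} := by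
  obtain ⟨O, hO, hne, hsub⟩ :=
    NoetherianSpace.exists_isOpen_nonempty_subset_irreducibleComponent _ hx
  exact ⟨O, hO, (isGenericPoint_closure.mem_open_set_iff hO).mpr
    (by rwa [Set.inter_eq_right.mpr hsub]), hsub⟩

/-- The dimension of a point `x`, i.e. the Krull dimension of the closure of `{x}`. -/
def pointDim (x : X) : WithBot ℕ∞ := topologicalKrullDim (closure {x} : Set X)

theorem pointDim_le_topologicalKrullDim (x : X) : pointDim x ≤ topologicalKrullDim X :=
  topologicalKrullDim_subspace_le _ _

theorem closure_singleton_mem_irreducibleComponents {n : ℕ} {x : X}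
    (hX : topologicalKrullDim X ≤ n) (hx : pointDim x = n) :
    closure {x} ∈ irreducibleComponents X :=
  mem_irreducibleComponents_of_topologicalKrullDim_le isIrreducible_singleton.closure
    isClosed_closure (hx.trans_lt (WithBot.coe_lt_coe.mpr (ENat.natCast_lt_top n)))
    (hX.trans_eq hx.symm)

theorem closure_inter_range_of_isInducing {f : X → Y} (hf : IsInducing f) (x : X) :
    closure {f x} ∩ Set.range f = f '' closure {x} := by
  rw [hf.closure_eq_preimage_closure_image, Set.image_singleton, Set.image_preimage_eq_inter_range]

theorem topologicalKrullDim_closure_inter_range {f : X → Y} (hf : IsEmbedding f) (x : X) :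
    topologicalKrullDim (closure {f x} ∩ Set.range f : Set Y) = pointDim x := by
  rw [closure_inter_range_of_isInducing hf.isInducing, topologicalKrullDim_image hf, pointDim]

theorem pointDim_of_isClosedEmbedding {f : X → Y} (hf : IsClosedEmbedding f) (x : X) :
    pointDim (f x) = pointDim x := by
  rw [pointDim, ← Set.image_singleton, hf.closure_image_eq,
    topologicalKrullDim_image hf.isEmbedding, pointDim]

end TopologicalDimension

section DimensionOfOpens

open Topology

theorem closure_singleton_eq_range_comap_quotientMk {R : Type*} [CommRing R]
    (p : PrimeSpectrum R) :
    closure {p} = Set.range (PrimeSpectrum.comap (Ideal.Quotient.mk p.asIdeal)) := by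
  rw [range_comap_of_surjective _ _ Ideal.Quotient.mk_surjective,
    PrimeSpectrum.closure_singleton, Ideal.mk_ker]

theorem pointDim_primeSpectrum {R : Type*} [CommRing R] (p : PrimeSpectrum R) :
    pointDim p = ringKrullDim (R ⧸ p.asIdeal) := by
  have hemb := PrimeSpectrum.isClosedEmbedding_comap_of_surjective _
    (Ideal.Quotient.mk p.asIdeal) Ideal.Quotient.mk_surjective
  rw [pointDim, closure_singleton_eq_range_comap_quotientMk,
    topologicalKrullDim_range hemb.isEmbedding,
    PrimeSpectrum.topologicalKrullDim_eq_ringKrullDim]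

theorem ringKrullDim_localizationAway_quotient_le {R : Type*} [CommRing R]
    (p : PrimeSpectrum R) (f : R) :
    ringKrullDim (Localization.Away (Ideal.Quotient.mk p.asIdeal f)) ≤
      topologicalKrullDim (closure {p} ∩ PrimeSpectrum.basicOpen f : Set (PrimeSpectrum R)) := by
  let π := Ideal.Quotient.mk p.asIdeal
  have hπ := PrimeSpectrum.isClosedEmbedding_comap_of_surjective _ π Ideal.Quotient.mk_surjective
  have hloc := PrimeSpectrum.localization_away_isOpenEmbedding (Localization.Away (π f)) (π f)
  have hmem (q : PrimeSpectrum (Localization.Away (π f))) :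
      PrimeSpectrum.comap π (PrimeSpectrum.comap (algebraMap _ _) q) ∈
        closure {p} ∩ (PrimeSpectrum.basicOpen f : Set (PrimeSpectrum R)) := by
    refine ⟨closure_singleton_eq_range_comap_quotientMk p ▸ Set.mem_range_self _, ?_⟩
    have hq : PrimeSpectrum.comap (algebraMap _ _) q ∈ PrimeSpectrum.basicOpen (π f) :=
      (PrimeSpectrum.localization_away_comap_range _ (π f)).subset (Set.mem_range_self q)
    exact hq
  rw [← PrimeSpectrum.topologicalKrullDim_eq_ringKrullDim]
  exact ((hπ.isInducing.comp hloc.isInducing).codRestrict hmem).topologicalKrullDim_le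

theorem topologicalKrullDim_closure_inter_of_isOpen_primeSpectrum (k : Type*) {R : Type*} [Field k]
    [CommRing R] [Algebra k R] [Algebra.FiniteType k R] {p : PrimeSpectrum R}
    {O : Set (PrimeSpectrum R)} (hO : IsOpen O) (hp : p ∈ O) :
    topologicalKrullDim (closure {p} ∩ O : Set (PrimeSpectrum R)) = pointDim p := by
  refine (topologicalKrullDim_mono Set.inter_subset_left).antisymm ?_
  obtain ⟨_, ⟨f, rfl⟩, hpf, hfO⟩ :=
    PrimeSpectrum.isTopologicalBasis_basic_opens.exists_subset_of_mem_open hp hO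
  have hf : Ideal.Quotient.mk p.asIdeal f ≠ 0 := Ideal.Quotient.eq_zero_iff_mem.not.mpr hpf
  calc
    pointDim p = ringKrullDim (R ⧸ p.asIdeal) := pointDim_primeSpectrum p
    _ ≤ ringKrullDim (Localization.Away (Ideal.Quotient.mk p.asIdeal f)) :=
      ringKrullDim_le_ringKrullDim_localizationAway k hf
    _ ≤ topologicalKrullDim (closure {p} ∩ PrimeSpectrum.basicOpen f : Set (PrimeSpectrum R)) :=
      ringKrullDim_localizationAway_quotient_le p f
    _ ≤ topologicalKrullDim (closure {p} ∩ O : Set (PrimeSpectrum R)) :=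
      topologicalKrullDim_mono (Set.inter_subset_inter_right _ hfO)

variable {k : Type u} [Field k] {X : Scheme.{u}}

theorem pointDim_le_topologicalKrullDim_closure_inter {R : CommRingCat.{u}}
    (s : X ⟶ Spec (.of k)) [LocallyOfFiniteType s] (v : Spec R ⟶ X) [IsOpenImmersion v]
    {p : Spec R} {O : Set X} (hO : IsOpen O) (hp : v p ∈ O) :
    pointDim p ≤ topologicalKrullDim (closure {v p} ∩ O : Set X) := by
  obtain ⟨φ, hφ⟩ := Spec.map_surjective (v ≫ s)
  have : LocallyOfFiniteType (Spec.map φ) := hφ ▸ inferInstance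
  have hfin : φ.hom.FiniteType := HasRingHomProperty.Spec_iff.mp this
  algebraize [φ.hom]
  have hv := v.isOpenEmbedding
  have hmem (q : ↥(closure {p} ∩ v ⁻¹' O)) : v q ∈ closure {v p} ∩ O :=
    ⟨(hv.isInducing.specializes_iff.mpr (specializes_iff_mem_closure.mpr q.2.1)).mem_closure, q.2.2⟩
  calc
    pointDim p = topologicalKrullDim (closure {p} ∩ v ⁻¹' O : Set (Spec R)) :=
      (topologicalKrullDim_closure_inter_of_isOpen_primeSpectrum k
        (hO.preimage v.continuous) hp).symm
    _ ≤ topologicalKrullDim (closure {v p} ∩ O : Set X) :=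
      ((hv.isInducing.comp IsInducing.subtypeVal).codRestrict hmem).topologicalKrullDim_le

theorem topologicalKrullDim_closure_inter_of_isOpen (s : X ⟶ Spec (.of k))
    [LocallyOfFiniteType s] {x : X} {O : Set X} (hO : IsOpen O) (hx : x ∈ O) :
    topologicalKrullDim (closure {x} ∩ O : Set X) = pointDim x := by
  refine (topologicalKrullDim_mono Set.inter_subset_left).antisymm ?_
  refine topologicalKrullDim_le_of_forall_exists_isOpen fun ⟨t, ht⟩ ↦ ?_
  obtain ⟨R, v, _, htv, -⟩ :=
    Scheme.exists_affine_mem_range_and_range_subset (X := X) (U := ⊤) (x := t) trivial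
  have hv := v.isOpenEmbedding
  obtain ⟨p, rfl⟩ : x ∈ Set.range v :=
    (specializes_iff_mem_closure.mpr ht).mem_open hv.isOpen_range htv
  refine ⟨Subtype.val ⁻¹' Set.range v, hv.isOpen_range.preimage continuous_subtype_val, htv, ?_⟩
  calc
    topologicalKrullDim (Subtype.val ⁻¹' Set.range v : Set (closure {v p})) =
        topologicalKrullDim (closure {v p} ∩ Set.range v : Set X) := by
      rw [← topologicalKrullDim_image IsEmbedding.subtypeVal, Subtype.image_preimage_coe]
    _ = pointDim p := topologicalKrullDim_closure_inter_range hv.isEmbedding p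
    _ ≤ topologicalKrullDim (closure {v p} ∩ O : Set X) :=
      pointDim_le_topologicalKrullDim_closure_inter s v hO hx

theorem pointDim_of_isOpenImmersion (s : X ⟶ Spec (.of k)) [LocallyOfFiniteType s]
    {U : Scheme.{u}} (j : U ⟶ X) [IsOpenImmersion j] (u : U) : pointDim (j u) = pointDim u := by
  rw [← topologicalKrullDim_closure_inter_range j.isOpenEmbedding.isEmbedding,
    topologicalKrullDim_closure_inter_of_isOpen s j.isOpenEmbedding.isOpen_range ⟨u, rfl⟩]

end DimensionOfOpens

theorem ncard_preimage_add_ncard_preimage {X Y Z : Type*} {i : Y → X} {j : Z → X}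
    (hi : Function.Injective i) (hj : Function.Injective j)
    (hr : Set.range j = (Set.range i)ᶜ) {S : Set X} (hS : S.Finite) :
    (i ⁻¹' S).ncard + (j ⁻¹' S).ncard = S.ncard := by
  rw [← Set.ncard_image_of_injective _ hi, ← Set.ncard_image_of_injective _ hj,
    Set.image_preimage_eq_inter_range, Set.image_preimage_eq_inter_range, hr,
    ← Set.sdiff_eq, Set.ncard_inter_add_ncard_sdiff_eq_ncard S (Set.range i) hS]

theorem exists_equiv_of_card_fiber_eq {α β γ : Type*} [Finite α] [Finite β] {f : α → γ} {g : β → γ}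
    (h : ∀ c, Nat.card {a // f a = c} = Nat.card {b // g b = c}) :
    ∃ σ : α ≃ β, ∀ a, g (σ a) = f a :=
  let e c : {a // f a = c} ≃ {b // g b = c} := (Finite.card_eq.mp (h c)).some
  ⟨Equiv.ofFiberEquiv e, Equiv.ofFiberEquiv_map e⟩

namespace Variety

variable {k : Type u} [Field k]

attribute [instance] reduced locallyOfFiniteType quasiCompact

instance noetherianSpace (X : Variety k) : TopologicalSpace.NoetherianSpace X.toScheme := by
  have := LocallyOfFiniteType.isLocallyNoetherian X.str
  have := (quasiCompact_iff_compactSpace X.str).mp inferInstance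
  have : IsNoetherian X.toScheme := {}
  infer_instance

section PointGerm

/-- Two pointed varieties are locally isomorphic if some open neighbourhoods of their base points
are isomorphic over `k`, by an isomorphism identifying the base points. The common neighbourhood is
encoded as a scheme `W` with open immersions into both varieties. -/
def LocallyIso (P Q : Σ V : Variety k, V.toScheme) : Prop :=
  ∃ (W : Scheme.{u}) (a : W ⟶ P.1.toScheme) (b : W ⟶ Q.1.toScheme),
    IsOpenImmersion a ∧ IsOpenImmersion b ∧ a ≫ P.1.str = b ≫ Q.1.str ∧
    ∃ w : W, a w = P.2 ∧ b w = Q.2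

variable {P Q R : Σ V : Variety k, V.toScheme}

theorem LocallyIso.refl (P : Σ V : Variety k, V.toScheme) : LocallyIso P P :=
  ⟨P.1.toScheme, 𝟙 _, 𝟙 _, inferInstance, inferInstance, rfl, P.2, rfl, rfl⟩

theorem LocallyIso.symm (h : LocallyIso P Q) : LocallyIso Q P :=
  let ⟨W, a, b, ha, hb, hab, w, haw, hbw⟩ := h
  ⟨W, b, a, hb, ha, hab.symm, w, hbw, haw⟩

theorem LocallyIso.trans (h : LocallyIso P Q) (h' : LocallyIso Q R) : LocallyIso P R := by
  obtain ⟨W, a, b, _, _, hab, w, haw, hbw⟩ := h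
  obtain ⟨W', a', b', _, _, hab', w', haw', hbw'⟩ := h'
  obtain ⟨z, hzw, hzw'⟩ :=
    Scheme.Pullback.exists_preimage_pullback (f := b) (g := a') w w' (hbw.trans haw'.symm)
  refine ⟨pullback b a', pullback.fst b a' ≫ a, pullback.snd b a' ≫ b', inferInstance,
    inferInstance, ?_, z, ?_, ?_⟩
  · rw [Category.assoc, hab, pullback.condition_assoc, hab', Category.assoc]
  · rw [Scheme.Hom.comp_apply, hzw, haw]
  · rw [Scheme.Hom.comp_apply, hzw', hbw']

/-- The setoid of local isomorphism, for forming the quotient `PointGerm`. -/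
def locallyIsoSetoid (k : Type u) [Field k] : Setoid (Σ V : Variety k, V.toScheme) :=
  ⟨LocallyIso, LocallyIso.refl, LocallyIso.symm, LocallyIso.trans⟩

/-- Local isomorphism classes of pointed varieties over `k`. -/
def PointGerm (k : Type u) [Field k] : Type (u + 1) := Quotient (locallyIsoSetoid k)

/-- The local isomorphism class of `V` at the point `x`. -/
def germ (V : Variety k) (x : V.toScheme) : PointGerm k := Quotient.mk (locallyIsoSetoid k) ⟨V, x⟩

theorem germ_eq_iff {V W : Variety k} {x : V.toScheme} {y : W.toScheme} :
    germ V x = germ W y ↔ LocallyIso ⟨V, x⟩ ⟨W, y⟩ :=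
  Quotient.eq (r := locallyIsoSetoid k)

theorem germ_of_isOpenImmersion {U X : Variety k} (j : U.toScheme ⟶ X.toScheme)
    [IsOpenImmersion j] (hj : j ≫ X.str = U.str) (x : U.toScheme) : germ X (j x) = germ U x :=
  germ_eq_iff.mpr ⟨U.toScheme, j, 𝟙 _, inferInstance, inferInstance,
    hj.trans (Category.id_comp _).symm, x, rfl, rfl⟩

theorem germ_of_isClosedImmersion_of_subset_range {Y X : Variety k} (i : Y.toScheme ⟶ X.toScheme)
    [IsClosedImmersion i] (hi : i ≫ X.str = Y.str) {y : Y.toScheme} {W : X.toScheme.Opens}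
    (hyW : i y ∈ W) (hW : (W : Set X.toScheme) ⊆ Set.range i) : germ X (i y) = germ Y y := by
  have : Surjective (i ∣_ W) := by
    refine ⟨fun x ↦ ?_⟩
    obtain ⟨z, hz⟩ := hW x.2
    exact ⟨⟨z, show i z ∈ W from hz ▸ x.2⟩,
      Subtype.ext ((morphismRestrict_base_coe i W _).trans hz)⟩
  have : IsIso (i ∣_ W) := isIso_of_isClosedImmersion_of_surjective _
  have hcomm : ((i ∣_ W) ≫ W.ι) ≫ X.str = (i ⁻¹ᵁ W).ι ≫ Y.str := by simp [hi]
  have hpt : ((i ∣_ W) ≫ W.ι) ⟨y, hyW⟩ = i y := by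
    rw [morphismRestrict_ι]
    rfl
  exact germ_eq_iff.mpr ⟨(i ⁻¹ᵁ W).toScheme, (i ∣_ W) ≫ W.ι, (i ⁻¹ᵁ W).ι, inferInstance,
    inferInstance, hcomm, ⟨y, hyW⟩, hpt, rfl⟩

theorem germ_of_isClosedImmersion {Y X : Variety k} (i : Y.toScheme ⟶ X.toScheme)
    [IsClosedImmersion i] (hi : i ≫ X.str = Y.str) {y : Y.toScheme}
    (hy : closure {i y} ∈ irreducibleComponents X.toScheme) : germ X (i y) = germ Y y := by
  obtain ⟨O, hO, hyO, hOcl⟩ := exists_isOpen_mem_subset_closure_singleton hy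
  have hcl : closure {i y} ⊆ Set.range i :=
    closure_minimal (Set.singleton_subset_iff.mpr ⟨y, rfl⟩) i.isClosedEmbedding.isClosed_range
  exact germ_of_isClosedImmersion_of_subset_range i hi (W := ⟨O, hO⟩) hyO (hOcl.trans hcl)

theorem birEquiv_of_germ_eq {C D : Variety k} [IrreducibleSpace C.toScheme]
    [IrreducibleSpace D.toScheme] {x : C.toScheme} {y : D.toScheme} (h : germ C x = germ D y) :
    BirEquiv C D := by
  obtain ⟨W, a, b, _, _, hab, w, -, -⟩ := germ_eq_iff.mp h
  refine ⟨a.opensRange, b.opensRange, a.opensRange.isOpen.dense ⟨a w, w, rfl⟩,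
    b.opensRange.isOpen.dense ⟨b w, w, rfl⟩, a.isoOpensRange.symm ≪≫ b.isoOpensRange, ?_⟩
  calc
    (a.isoOpensRange.symm ≪≫ b.isoOpensRange).hom ≫ b.opensRange.ι ≫ D.str =
        a.isoOpensRange.inv ≫ b ≫ D.str := by simp
    _ = a.isoOpensRange.inv ≫ a ≫ C.str := by rw [hab]
    _ = a.opensRange.ι ≫ C.str := by simp

/-- The germ of an irreducible variety at its generic point; by `birEquiv_of_germ_eq` it determines
the birational isomorphism class. -/
def genericGerm (C : Variety k) [IrreducibleSpace C.toScheme] : PointGerm k :=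
  germ C (genericPoint C.toScheme)

end PointGerm

section PointsWithGerm

variable {n : ℕ} {X Y U : Variety k}

/-- The `n`-dimensional points of `X` at which `X` has germ `c`. Counting them gives the invariant
of `K0graded` used here. -/
def pointsWithGerm (n : ℕ) (X : Variety k) (c : PointGerm k) : Set X.toScheme :=
  {x | pointDim x = n ∧ germ X x = c}

theorem finite_pointsWithGerm (hX : X.dim ≤ n) (c : PointGerm k) :
    (pointsWithGerm n X c).Finite := by
  have hmaps : Set.MapsTo (closure {·}) (pointsWithGerm n X c)
      (irreducibleComponents X.toScheme) :=
    fun _ hx ↦ closure_singleton_mem_irreducibleComponents hX hx.1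
  exact Set.Finite.of_injOn hmaps (fun _ _ _ _ h ↦ (inseparable_iff_closure_eq.mpr h).eq)
    TopologicalSpace.NoetherianSpace.finite_irreducibleComponents

theorem pointsWithGerm_eq_empty (hX : X.dim < n) (c : PointGerm k) : pointsWithGerm n X c = ∅ :=
  Set.eq_empty_of_forall_notMem fun x hx ↦
    (hx.1.symm.le.trans (pointDim_le_topologicalKrullDim x)).not_gt hX

theorem preimage_pointsWithGerm_of_isOpenImmersion (j : U.toScheme ⟶ X.toScheme)
    [IsOpenImmersion j] (hj : j ≫ X.str = U.str) (c : PointGerm k) :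
    j ⁻¹' pointsWithGerm n X c = pointsWithGerm n U c := by
  ext u
  simp only [pointsWithGerm, Set.mem_preimage, Set.mem_ofPred_eq,
    pointDim_of_isOpenImmersion X.str j, germ_of_isOpenImmersion j hj]

theorem preimage_pointsWithGerm_of_isClosedImmersion (hX : X.dim ≤ n)
    (i : Y.toScheme ⟶ X.toScheme) [IsClosedImmersion i] (hi : i ≫ X.str = Y.str)
    (c : PointGerm k) : i ⁻¹' pointsWithGerm n X c = pointsWithGerm n Y c := by
  ext y
  have hdim : pointDim (i y) = pointDim y := pointDim_of_isClosedEmbedding i.isClosedEmbedding y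
  simp only [pointsWithGerm, Set.mem_preimage, Set.mem_ofPred_eq, ← hdim]
  refine and_congr_right fun hy ↦ ?_
  rw [germ_of_isClosedImmersion i hi (closure_singleton_mem_irreducibleComponents hX hy)]

theorem ncard_pointsWithGerm_of_iso (e : X.toScheme ≅ Y.toScheme) (he : e.hom ≫ Y.str = X.str)
    (c : PointGerm k) : (pointsWithGerm n X c).ncard = (pointsWithGerm n Y c).ncard := by
  rw [← preimage_pointsWithGerm_of_isOpenImmersion e.hom he]
  refine Set.ncard_preimage_of_injective_subset_range e.hom.isOpenEmbedding.injective ?_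
  rw [e.hom.surjective.range_eq]
  exact Set.subset_univ _

theorem ncard_pointsWithGerm_eq_add (hX : X.dim ≤ n) (i : Y.toScheme ⟶ X.toScheme)
    (j : U.toScheme ⟶ X.toScheme) [IsClosedImmersion i] [IsOpenImmersion j]
    (hi : i ≫ X.str = Y.str) (hj : j ≫ X.str = U.str) (hr : Set.range j = (Set.range i)ᶜ)
    (c : PointGerm k) :
    (pointsWithGerm n X c).ncard =
      (pointsWithGerm n Y c).ncard + (pointsWithGerm n U c).ncard := by
  rw [← preimage_pointsWithGerm_of_isClosedImmersion hX i hi,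
    ← preimage_pointsWithGerm_of_isOpenImmersion j hj,
    ncard_preimage_add_ncard_preimage i.isClosedEmbedding.injective j.isOpenEmbedding.injective hr
      (finite_pointsWithGerm hX c)]

/-- The universal property of `K0graded k n`: an additive invariant of varieties of dimension at
most `n` that vanishes in dimension less than `n` factors through it. -/
def K0graded.lift {A : Type*} [AddCommGroup A] (χ : {V : Variety k // V.dim ≤ n} → A)
    (hiso : ∀ X Y, ∀ e : X.1.toScheme ≅ Y.1.toScheme, e.hom ≫ Y.1.str = X.1.str → χ X = χ Y)
    (hcut : ∀ X Y U, ∀ (i : Y.1.toScheme ⟶ X.1.toScheme) (j : U.1.toScheme ⟶ X.1.toScheme)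
      [IsClosedImmersion i] [IsOpenImmersion j], i ≫ X.1.str = Y.1.str → j ≫ X.1.str = U.1.str →
      Set.range j = (Set.range i)ᶜ → χ X = χ Y + χ U)
    (hsmall : ∀ X, X.1.dim < (n : WithBot ℕ∞) → χ X = 0) : K0graded k n →+ A :=
  QuotientAddGroup.lift _ (FreeAbelianGroup.lift χ) <| (AddSubgroup.closure_le _).mpr <| by
    rintro _ ((⟨X, Y, ⟨e, he⟩, rfl⟩ | ⟨X, Y, U, i, j, _, _, hi, hj, hr, rfl⟩) | ⟨X, hX, rfl⟩)
    · simp [hiso X Y e he]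
    · simp [hcut X Y U i j hi hj hr]
    · simp [hsmall X hX]

theorem K0graded.lift_cls {A : Type*} [AddCommGroup A] (χ : {V : Variety k // V.dim ≤ n} → A)
    (hiso hcut hsmall) (X : Variety k) (hX : X.dim ≤ n) :
    K0graded.lift χ hiso hcut hsmall (K0graded.cls n X hX) = χ ⟨X, hX⟩ :=
  FreeAbelianGroup.lift_apply_of χ _

theorem ncard_pointsWithGerm_eq_of_cls_eq {hX : X.dim ≤ n} {hY : Y.dim ≤ n}
    (h : K0graded.cls n X hX = K0graded.cls n Y hY) (c : PointGerm k) :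
    (pointsWithGerm n X c).ncard = (pointsWithGerm n Y c).ncard := by
  let count : K0graded k n →+ ℤ := K0graded.lift (fun V ↦ (pointsWithGerm n V.1 c).ncard)
    (fun _ _ e he ↦ congrArg _ (ncard_pointsWithGerm_of_iso e he c))
    (fun X _ _ i j _ _ hi hj hr ↦ mod_cast ncard_pointsWithGerm_eq_add X.2 i j hi hj hr c)
    (fun _ hV ↦ by simp [pointsWithGerm_eq_empty hV])
  have hcount : count (K0graded.cls n X hX) = count (K0graded.cls n Y hY) := congrArg count h
  simpa only [count, K0graded.lift_cls, Nat.cast_inj] using hcount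

end PointsWithGerm

namespace RealizesComponents

variable {n m : ℕ} {X : Variety k} {C : Fin m → Variety k}
  {f : ∀ i, (C i).toScheme ⟶ X.toScheme}

theorem range_mem (hC : RealizesComponents n X m C f) (i : Fin m) :
    Set.range (f i) ∈ irreducibleComponents X.toScheme ∧
      topologicalKrullDim (Set.range (f i)) = n :=
  hC.2.2.2.subset (Set.mem_range_self i)

theorem irreducibleSpace (hC : RealizesComponents n X m C f) (i : Fin m) :
    IrreducibleSpace (C i).toScheme := by
  have := hC.1 i
  exact irreducibleSpace_of_isIrreducible_range (f i).isClosedEmbedding.isEmbedding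
    (hC.range_mem i).1.1

variable [∀ i, IrreducibleSpace (C i).toScheme]

theorem closure_genericPoint (hC : RealizesComponents n X m C f) (i : Fin m) :
    closure {f i (genericPoint (C i).toScheme)} = Set.range (f i) := by
  have := hC.1 i
  rw [← Set.image_singleton, (f i).isClosedEmbedding.closure_image_eq, genericPoint_closure,
    Set.image_univ]

theorem injective_genericPoint (hC : RealizesComponents n X m C f) :
    Function.Injective fun i ↦ f i (genericPoint (C i).toScheme) := fun i j hij ↦
  hC.2.2.1 ((hC.closure_genericPoint i).symm.trans
    ((congrArg (closure {·}) hij).trans (hC.closure_genericPoint j)))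

theorem exists_genericPoint_eq (hC : RealizesComponents n X m C f) (hX : X.dim ≤ n)
    {x : X.toScheme} (hx : pointDim x = n) : ∃ i, f i (genericPoint (C i).toScheme) = x := by
  obtain ⟨i, hi⟩ := hC.2.2.2.symm.subset ⟨closure_singleton_mem_irreducibleComponents hX hx, hx⟩
  exact ⟨i, (inseparable_iff_closure_eq.mpr ((hC.closure_genericPoint i).trans hi)).eq⟩

theorem genericPoint_mem_pointsWithGerm_iff (hC : RealizesComponents n X m C f) (i : Fin m)
    (c : PointGerm k) :
    f i (genericPoint (C i).toScheme) ∈ pointsWithGerm n X c ↔ genericGerm (C i) = c := by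
  have := hC.1 i
  have hcl := hC.closure_genericPoint i
  have hdim : pointDim (f i (genericPoint (C i).toScheme)) = n := by
    rw [pointDim, hcl]
    exact (hC.range_mem i).2
  have hgerm := germ_of_isClosedImmersion (f i) (hC.2.1 i) (hcl ▸ (hC.range_mem i).1)
  rw [genericGerm, ← hgerm]
  exact and_iff_right hdim

theorem ncard_pointsWithGerm (hC : RealizesComponents n X m C f) (hX : X.dim ≤ n)
    (c : PointGerm k) :
    (pointsWithGerm n X c).ncard = Nat.card {i // genericGerm (C i) = c} := by
  have hpre : {i | genericGerm (C i) = c} =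
      (fun i ↦ f i (genericPoint (C i).toScheme)) ⁻¹' pointsWithGerm n X c :=
    Set.ext fun i ↦ (hC.genericPoint_mem_pointsWithGerm_iff i c).symm
  rw [← Set.ncard_preimage_of_injective_subset_range hC.injective_genericPoint
    fun x hx ↦ hC.exists_genericPoint_eq hX hx.1, ← hpre]
  rfl

end RealizesComponents

end Variety

/-- If `[X] = [Y]` in `K_0(V_k^{(n,n-1)})` for varieties of dimension
at most `n`, then `X` and `Y` have the same number of `n`-dimensional irreducible
components, and there is a bijection between them under which corresponding components
are birationally isomorphic. -/
theorem components_birEquiv_of_eq_K0graded (k : Type u) [Field k] (n : ℕ)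
    (X Y : Variety k)
    (hX : X.dim ≤ (n : WithBot ℕ∞)) (hY : Y.dim ≤ (n : WithBot ℕ∞))
    (h : K0graded.cls n X hX = K0graded.cls n Y hY)
    (a b : ℕ) (C : Fin a → Variety k) (D : Fin b → Variety k)
    (f : ∀ i, (C i).toScheme ⟶ X.toScheme) (g : ∀ i, (D i).toScheme ⟶ Y.toScheme)
    (hC : RealizesComponents n X a C f) (hD : RealizesComponents n Y b D g) :
    a = b ∧ ∃ σ : Fin a ≃ Fin b, ∀ i, BirEquiv (C i) (D (σ i)) := by
  have := hC.irreducibleSpace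
  have := hD.irreducibleSpace
  have hcard c : Nat.card {i // genericGerm (C i) = c} = Nat.card {j // genericGerm (D j) = c} :=
    calc
      Nat.card {i // genericGerm (C i) = c} = (pointsWithGerm n X c).ncard :=
        (hC.ncard_pointsWithGerm hX c).symm
      _ = (pointsWithGerm n Y c).ncard := ncard_pointsWithGerm_eq_of_cls_eq h c
      _ = Nat.card {j // genericGerm (D j) = c} := hD.ncard_pointsWithGerm hY c
  obtain ⟨σ, hσ⟩ := exists_equiv_of_card_fiber_eq hcard
  exact ⟨Fin.equiv_iff_eq.mp ⟨σ⟩, σ, fun i ↦ birEquiv_of_germ_eq (hσ i).symm⟩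
end
end

section
/- Let k be a convenient field, let X and X' be smooth projective irreducible varieties over k of dimension n−1, and let φ: X × 𝔸¹ ⇢ X' × 𝔸¹ be a birational isomorphism represented by an isomorphism U → V of dense open subvarieties. Then in K_0(V_k^{(n−1)}) one has [(X' × 𝔸¹)∖V] − [(X × 𝔸¹)∖U] ≡ [X] − [X'] modulo the image of multiplication by L : K_0(V_k^{(n−2)}) → K_0(V_k^{(n−1)}). -/
open AlgebraicGeometry CategoryTheory CategoryTheory.Limits

noncomputable section

universe u

open Variety

/-!
Compactify `X × 𝔸¹` by `X × ℙ¹`, which is again smooth and projective (Segre). The missing points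
form a copy of `X` at infinity, so the complement of `U` in `X × ℙ¹` has class
`[X] + [(X × 𝔸¹) ∖ U]`, and likewise for `V` in `X' × ℙ¹`. Convenience of the induced birational
isomorphism of `X' × ℙ¹` with `X × ℙ¹` compares the two classes.
-/

/-! ## Dimension -/

theorem withBotENat_iSup_add_one {ι : Type*} (y : ι → WithBot ℕ∞) :
    (⨆ i, y i) + 1 = ⨆ i, (y i + 1) := by
  have le_of_zero (h : ∀ i, y i + 1 ≤ 0) : (⨆ i, y i) + 1 ≤ ⊥ := by
    have hbot : ⨆ i, y i = ⊥ :=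
      iSup_eq_bot.mpr fun i => (ENat.WithBot.add_one_le_zero_iff _).mp (h i)
    simp [hbot]
  refine le_antisymm ?_ (iSup_le fun i => by gcongr; exact le_iSup y i)
  generalize hc : ⨆ i, (y i + 1) = c
  have hyc (i : ι) : y i + 1 ≤ c := hc ▸ le_iSup (fun i => y i + 1) i
  induction c using WithBot.recBotCoe with
  | bot => exact le_of_zero fun i => (hyc i).trans bot_le
  | coe c =>
    induction c using ENat.recTopCoe with
    | top => exact le_top
    | coe c =>
      cases c with
      | zero => exact (le_of_zero hyc).trans bot_le
      | succ m =>
        have add_one_le_iff (x : WithBot ℕ∞) : x + 1 ≤ ((m + 1 : ℕ) : ℕ∞) ↔ x ≤ (m : ℕ∞) :=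
          ENat.WithBot.add_le_add_one_right_iff (b := (m : ℕ∞))
        exact (add_one_le_iff _).mpr (iSup_le fun i => (add_one_le_iff _).mp (hyc i))

theorem topologicalKrullDim_le_of_isOpenEmbedding_cover {X ι : Type*} [TopologicalSpace X]
    {Y : ι → Type*} [∀ i, TopologicalSpace (Y i)] {f : ∀ i, Y i → X}
    (hf : ∀ i, Topology.IsOpenEmbedding (f i)) (hcover : ∀ x, ∃ i, x ∈ Set.range (f i)) :
    topologicalKrullDim X ≤ ⨆ i, topologicalKrullDim (Y i) := by
  unfold topologicalKrullDim
  rw [Order.krullDim_eq_iSup_coheight]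
  refine iSup_le fun Z => ?_
  obtain ⟨x, hx⟩ := Z.2.nonempty
  obtain ⟨i, y, rfl⟩ := hcover x
  let e := TopologicalSpace.IrreducibleCloseds.orderIsoOfIsOpenEmbedding (f i) (hf i)
  let T := e.symm ⟨Z, ⟨y, hx⟩⟩
  have hT : TopologicalSpace.IrreducibleCloseds.map (f i) (hf i).continuous T = Z :=
    congrArg Subtype.val (e.apply_symm_apply ⟨Z, ⟨y, hx⟩⟩)
  rw [← hT, (hf i).coheight_map]
  exact (Order.coheight_le_krullDim T).trans
    (le_iSup (fun i => Order.krullDim (TopologicalSpace.IrreducibleCloseds (Y i))) i)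

theorem topologicalKrullDim_eq_iSup_openCover {X : Scheme.{u}} (𝒰 : X.OpenCover) :
    topologicalKrullDim X = ⨆ i, topologicalKrullDim (𝒰.X i) :=
  le_antisymm
    (topologicalKrullDim_le_of_isOpenEmbedding_cover (fun i => (𝒰.f i).isOpenEmbedding)
      fun x => ⟨_, 𝒰.covers x⟩)
    (iSup_le fun i => (𝒰.f i).isOpenEmbedding.isInducing.topologicalKrullDim_le)

theorem topologicalKrullDim_add_one_le_of_isClosedEmbedding {Z P : Type*} [TopologicalSpace Z]
    [TopologicalSpace P] [IrreducibleSpace P] {f : Z → P} (hf : Topology.IsClosedEmbedding f)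
    (hne : Set.range f ≠ Set.univ) :
    topologicalKrullDim Z + 1 ≤ topologicalKrullDim P := by
  unfold topologicalKrullDim
  cases isEmpty_or_nonempty (TopologicalSpace.IrreducibleCloseds Z) with
  | inl h => simp [Order.krullDim_eq_bot]
  | inr h =>
    rw [← Order.krullDim_WithTop]
    let whole : TopologicalSpace.IrreducibleCloseds P :=
      ⟨Set.univ, IrreducibleSpace.isIrreducible_univ P, isClosed_univ⟩
    have map_lt_whole (a : TopologicalSpace.IrreducibleCloseds Z) :
        TopologicalSpace.IrreducibleCloseds.map f hf.continuous a < whole := by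
      refine lt_of_le_of_ne (fun x _ => trivial) fun h => hne (Set.eq_univ_of_univ_subset ?_)
      have hdense : closure (f '' (a : Set Z)) = Set.univ := congrArg SetLike.coe h
      exact hdense ▸ closure_minimal (Set.image_subset_range f _) hf.isClosed_range
    refine Order.krullDim_le_of_strictMono
      (WithTop.recTopCoe whole (TopologicalSpace.IrreducibleCloseds.map f hf.continuous))
      fun a b hab => ?_
    induction a using WithTop.recTopCoe with
    | top => exact absurd hab not_top_lt
    | coe a =>
      induction b using WithTop.recTopCoe with
      | top => exact map_lt_whole a
      | coe b =>
        exact TopologicalSpace.IrreducibleCloseds.map_strictMono_of_isInducing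
          hf.isInducing (WithTop.coe_lt_coe.mp hab)

theorem topologicalKrullDim_eq_of_iso {X Y : Scheme.{u}} (e : X ≅ Y) :
    topologicalKrullDim X = topologicalKrullDim Y :=
  IsHomeomorph.topologicalKrullDim_eq _ (Scheme.homeoOfIso e).isHomeomorph

theorem topologicalKrullDim_affineSpace_Spec (R : CommRingCat.{u}) [IsNoetherianRing R] :
    topologicalKrullDim 𝔸(PUnit.{u + 1}; Spec R) = topologicalKrullDim (Spec R) + 1 :=
  calc topologicalKrullDim 𝔸(PUnit.{u + 1}; Spec R)
    _ = topologicalKrullDim (PrimeSpectrum (MvPolynomial PUnit.{u + 1} R)) :=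
      topologicalKrullDim_eq_of_iso (AffineSpace.SpecIso PUnit.{u + 1} R)
    _ = ringKrullDim R + Nat.card PUnit.{u + 1} := by
      rw [PrimeSpectrum.topologicalKrullDim_eq_ringKrullDim,
        MvPolynomial.ringKrullDim_of_isNoetherianRing]
    _ = topologicalKrullDim (Spec R) + 1 := by
      rw [← PrimeSpectrum.topologicalKrullDim_eq_ringKrullDim, Nat.card_unique, Nat.cast_one]
      rfl

theorem topologicalKrullDim_affineSpace (X : Scheme.{u}) [IsLocallyNoetherian X] :
    topologicalKrullDim 𝔸(PUnit.{u + 1}; X) = topologicalKrullDim X + 1 := by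
  have dim_chart (i : X.affineCover.I₀) :
      topologicalKrullDim ((X.affineCover.pullback₁ (𝔸(PUnit.{u + 1}; X) ↘ X)).X i) =
        topologicalKrullDim (X.affineCover.X i) + 1 := by
    have : IsNoetherianRing (X.affineOpenCover.X i) :=
      isLocallyNoetherian_Spec.mp (inferInstanceAs (IsLocallyNoetherian (X.affineCover.X i)))
    exact (topologicalKrullDim_eq_of_iso
      (AffineSpace.isPullback_map (X.affineCover.f i)).isoPullback.symm).trans
      (topologicalKrullDim_affineSpace_Spec (X.affineOpenCover.X i))
  rw [topologicalKrullDim_eq_iSup_openCover (X.affineCover.pullback₁ (𝔸(PUnit.{u + 1}; X) ↘ X)),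
    topologicalKrullDim_eq_iSup_openCover X.affineCover, withBotENat_iSup_add_one]
  exact iSup_congr dim_chart

/-! ## The affine line -/

/-- The structure morphism `𝔸¹ ⟶ Spec k` of the affine line, in the model `Spec k[t]` used by
`Variety.IsAffLine`. -/
abbrev affineLineStr (k : Type u) [Field k] :
    Spec (CommRingCat.of (Polynomial k)) ⟶ Spec (CommRingCat.of k) :=
  Spec.map (CommRingCat.ofHom (algebraMap k (Polynomial k)))

section AffineLine

variable {k : Type u} [Field k] {X : Scheme.{u}} (x : X ⟶ Spec (CommRingCat.of k))

/-- The product of a `k`-scheme with `Spec k[t]`, compared with Mathlib's affine space. -/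
def pullbackAffineLineIso : pullback x (affineLineStr k) ≅ 𝔸(PUnit.{u + 1}; X) :=
  let e : Spec (CommRingCat.of (Polynomial k)) ≅ 𝔸(PUnit.{u + 1}; Spec (CommRingCat.of k)) :=
    Scheme.Spec.mapIso
      (MvPolynomial.uniqueAlgEquiv.{u, u} k PUnit.{u + 1}).toRingEquiv.toCommRingCatIso.op ≪≫
      (AffineSpace.SpecIso PUnit.{u + 1} (CommRingCat.of k)).symm
  have he : e.hom ≫ (𝔸(PUnit.{u + 1}; Spec (CommRingCat.of k)) ↘ Spec (CommRingCat.of k)) =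
      affineLineStr k := by
    simp only [e, Iso.trans_hom, Category.assoc, Iso.symm_hom, AffineSpace.SpecIso_inv_over,
      Functor.mapIso_hom, Scheme.Spec_map]
    refine (Spec.map_comp _ _).symm.trans (congrArg Spec.map ?_)
    exact CommRingCat.hom_ext (RingHom.ext
      (MvPolynomial.uniqueAlgEquiv k PUnit.{u + 1}).commutes)
  asIso (pullback.map x (affineLineStr k) x _ (𝟙 _) e.hom (𝟙 _) (by simp) (by simp [he])) ≪≫
    (AffineSpace.isPullback_map (n := PUnit.{u + 1}) x).flip.isoPullback.symm

theorem irreducibleSpace_pullback_affineLine [IrreducibleSpace X] :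
    IrreducibleSpace ↥(pullback x (affineLineStr k)) :=
  have homeo := (Scheme.homeoOfIso (pullbackAffineLineIso x)).symm
  homeo.surjective.irreducibleSpace homeo.continuous

theorem isReduced_pullback_affineLine [IsReduced X] :
    IsReduced (pullback x (affineLineStr k)) :=
  isReduced_of_isOpenImmersion (pullbackAffineLineIso x).hom

theorem topologicalKrullDim_pullback_affineLine [LocallyOfFiniteType x] :
    topologicalKrullDim ↥(pullback x (affineLineStr k)) = topologicalKrullDim X + 1 := by
  have : IsLocallyNoetherian X := LocallyOfFiniteType.isLocallyNoetherian x
  rw [topologicalKrullDim_eq_of_iso (pullbackAffineLineIso x), topologicalKrullDim_affineSpace]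

instance smooth_affineLineStr : Smooth (affineLineStr k) := by
  rw [HasRingHomProperty.Spec_iff (P := @Smooth), CommRingCat.hom_ofHom,
    RingHom.smooth_algebraMap]
  exact { }

end AffineLine

/-! ## Morphisms to `Proj` -/

section MapsToProj

open HomogeneousLocalization

variable {σ : Type*} {A : Type u} [CommRing A] [SetLike σ A] [AddSubgroupClass σ A]
  (𝒜 : ℕ → σ) [GradedRing 𝒜]

section AwayLift

variable {R : Type u} [CommRing R] (f : A →+* R) {t : A} (hu : IsUnit (f t))

/-- The ring homomorphism `A_(t) → R`, `a / tⁿ ↦ f a / (f t)ⁿ`, defined by `f : A → R` when `f t`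
is a unit. -/
def awayLift : Away 𝒜 t →+* R :=
  (IsLocalization.Away.lift (S := Localization.Away t) t hu).comp
    (algebraMap (Away 𝒜 t) (Localization.Away t))

variable {d : ℕ} (ht : t ∈ 𝒜 d)

theorem awayLift_mk_mul_pow (n : ℕ) (a : A) (ha : a ∈ 𝒜 (n • d)) :
    awayLift 𝒜 f hu (Away.mk 𝒜 ht n a ha) * f t ^ n = f a := by
  have hfrac : (Localization.mk a ⟨t ^ n, n, rfl⟩ : Localization.Away t) *
      algebraMap A _ (t ^ n) = algebraMap A _ a := by
    rw [← Localization.mk_one_eq_algebraMap, ← Localization.mk_one_eq_algebraMap,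
      Localization.mk_mul, Localization.mk_eq_mk_iff, Localization.r_iff_exists]
    exact ⟨1, by simp [mul_comm]⟩
  have hlift := congrArg (IsLocalization.Away.lift (S := Localization.Away t) t hu) hfrac
  rwa [map_mul, IsLocalization.Away.lift_eq, IsLocalization.Away.lift_eq, map_pow] at hlift

theorem eq_awayLift (g : Away 𝒜 t →+* R)
    (h : ∀ (n : ℕ) (a : A) (ha : a ∈ 𝒜 (n • d)), g (Away.mk 𝒜 ht n a ha) * f t ^ n = f a) :
    g = awayLift 𝒜 f hu := by
  ext z
  obtain ⟨n, a, ha, rfl⟩ := Away.mk_surjective 𝒜 ht z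
  exact (hu.pow n).mul_right_cancel ((h n a ha).trans (awayLift_mk_mul_pow 𝒜 f hu ht n a ha).symm)

end AwayLift

variable {T : Scheme.{u}} {f : A →+* Γ(T, ⊤)} {t : A} {d : ℕ}
  (ht : t ∈ 𝒜 d) (hd : 0 < d) (hu : IsUnit (f t))

include ht hd hu in
theorem map_irrelevant_eq_top_of_isUnit :
    (HomogeneousIdeal.irrelevant 𝒜).toIdeal.map f = ⊤ :=
  Ideal.eq_top_of_isUnit_mem _ (Ideal.mem_map_of_mem f (by
    simpa using DirectSum.decompose_of_mem_ne 𝒜 ht hd.ne')) hu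

variable (hf : (HomogeneousIdeal.irrelevant 𝒜).toIdeal.map f = ⊤)

theorem fromOfGlobalSections_eq_awayLift_comp_awayι :
    Proj.fromOfGlobalSections 𝒜 f hf =
      T.toSpecΓ ≫ Spec.map (CommRingCat.ofHom (awayLift 𝒜 f hu)) ≫ Proj.awayι 𝒜 t ht hd := by
  have hlift : (algebraMap Γ(T, ⊤) (Localization.Away (f t))).comp (awayLift 𝒜 f hu) =
      (IsLocalization.map (M := .powers t) (T := .powers (f t)) (Localization.Away (f t)) f
        (by rw [← Submonoid.map_le_iff_le_comap, Submonoid.map_powers])).comp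
        (algebraMap (Away 𝒜 t) (Localization.Away t)) := by
    rw [awayLift, ← RingHom.comp_assoc]
    congr 1
    apply IsLocalization.ringHom_ext (M := .powers t)
    ext a
    simp
  have : IsIso (T.basicOpen (f t)).ι := by
    rw [Scheme.basicOpen_of_isUnit _ hu]
    exact T.topIso.isIso_hom
  have hι : (T.basicOpen (f t)).ι ≫ Proj.fromOfGlobalSections 𝒜 f hf =
      Proj.toBasicOpenOfGlobalSections 𝒜 f rfl hd ht ≫ (Proj.basicOpen 𝒜 t).ι :=
    (Proj.openCoverOfMapIrrelevantEqTop 𝒜 f hf).ι_glueMorphisms _ _ ⟨d, t, hd, ht⟩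
  rw [← cancel_epi (T.basicOpen (f t)).ι, hι, Proj.toBasicOpenOfGlobalSections, ← hlift]
  simp only [CommRingCat.ofHom_comp, Spec.map_comp, Category.assoc, Proj.basicOpenIsoSpec_inv_ι,
    basicOpenIsoSpecAway_hom_SpecMap_assoc, Iso.inv_comp_eq]
  exact (morphismRestrict_ι_assoc ..).trans (Scheme.isoOfEq_hom_ι_assoc ..).symm

include ht hd hu in
theorem fromOfGlobalSections_eq_of_scale {g : A →+* Γ(T, ⊤)} {v : Γ(T, ⊤)}
    (hfg : ∀ (n : ℕ) (a : A), a ∈ 𝒜 n → g a = v ^ n * f a)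
    (hg : (HomogeneousIdeal.irrelevant 𝒜).toIdeal.map g = ⊤) (hu' : IsUnit (g t)) :
    Proj.fromOfGlobalSections 𝒜 f hf = Proj.fromOfGlobalSections 𝒜 g hg := by
  have hlift : awayLift 𝒜 f hu = awayLift 𝒜 g hu' := by
    refine eq_awayLift 𝒜 g hu' ht _ fun n a ha => ?_
    rw [hfg _ _ ha, hfg _ _ ht, mul_pow, ← awayLift_mk_mul_pow 𝒜 f hu ht n a ha, ← pow_mul,
      smul_eq_mul, mul_comm n d]
    ring
  rw [fromOfGlobalSections_eq_awayLift_comp_awayι 𝒜 ht hd hu,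
    fromOfGlobalSections_eq_awayLift_comp_awayι 𝒜 ht hd hu', hlift]

include ht hd hu in
theorem comp_fromOfGlobalSections_of_isUnit {T' : Scheme.{u}} (g : T' ⟶ T) :
    g ≫ Proj.fromOfGlobalSections 𝒜 f hf = Proj.fromOfGlobalSections 𝒜 (g.appTop.hom.comp f)
      (by rw [← Ideal.map_map, hf, Ideal.map_top]) := by
  have hlift : g.appTop.hom.comp (awayLift 𝒜 f hu) =
      awayLift 𝒜 (g.appTop.hom.comp f) (hu.map g.appTop.hom) := by
    refine eq_awayLift 𝒜 _ _ ht _ fun n a ha => ?_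
    simp only [RingHom.comp_apply]
    rw [← map_pow, ← map_mul, awayLift_mk_mul_pow]
  rw [fromOfGlobalSections_eq_awayLift_comp_awayι 𝒜 ht hd hu,
    fromOfGlobalSections_eq_awayLift_comp_awayι 𝒜 ht hd (hu.map g.appTop.hom),
    Scheme.toSpecΓ_naturality_assoc, ← Spec.map_comp_assoc, ← hlift]
  rfl

end MapsToProj

/-! ## Projective space and its standard charts -/

section GlobalSections

variable {R : Type u} [CommRing R] {T : Scheme.{u}} (φ : T ⟶ Spec (CommRingCat.of R))

/-- The ring homomorphism `R → Γ(T, 𝒪)` corresponding to a morphism `T ⟶ Spec R`. -/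
def globalSectionsHom : R →+* Γ(T, ⊤) :=
  φ.appTop.hom.comp (Scheme.ΓSpecIso (CommRingCat.of R)).inv.hom

theorem globalSectionsHom_comp {T' : Scheme.{u}} (g : T' ⟶ T) :
    globalSectionsHom (g ≫ φ) = g.appTop.hom.comp (globalSectionsHom φ) := by
  rw [globalSectionsHom, Scheme.Hom.comp_appTop]
  rfl

theorem globalSectionsHom_comp_SpecMap {S : Type u} [CommRing S] (h : S →+* R) :
    globalSectionsHom (φ ≫ Spec.map (CommRingCat.ofHom h)) = (globalSectionsHom φ).comp h := by
  have hnat : (Spec.map (CommRingCat.ofHom h)).appTop.hom.comp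
      (Scheme.ΓSpecIso (CommRingCat.of S)).inv.hom =
      (Scheme.ΓSpecIso (CommRingCat.of R)).inv.hom.comp h :=
    congrArg CommRingCat.Hom.hom (Scheme.ΓSpecIso_inv_naturality (CommRingCat.ofHom h)).symm
  rw [globalSectionsHom, globalSectionsHom, Scheme.Hom.comp_appTop, CommRingCat.hom_comp,
    RingHom.comp_assoc, hnat, RingHom.comp_assoc]

theorem toSpecΓ_SpecMap_globalSectionsHom :
    T.toSpecΓ ≫ Spec.map (CommRingCat.ofHom (globalSectionsHom φ)) = φ := by
  rw [globalSectionsHom, CommRingCat.ofHom_comp, Spec.map_comp]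
  change T.toSpecΓ ≫ Spec.map φ.appTop ≫ Spec.map (Scheme.ΓSpecIso (CommRingCat.of R)).inv = φ
  rw [← Scheme.toSpecΓ_naturality_assoc, toSpecΓ_SpecMap_ΓSpecIso_inv, Category.comp_id]

theorem globalSectionsHom_bijective [IsIso φ] : Function.Bijective (globalSectionsHom φ) := by
  have : IsIso φ.appTop := inferInstanceAs (IsIso (φ.app ⊤))
  exact ConcreteCategory.bijective_of_isIso ((Scheme.ΓSpecIso (CommRingCat.of R)).inv ≫ φ.appTop)

end GlobalSections

section ProjectiveSpace

open HomogeneousLocalization MvPolynomial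

attribute [local instance] MvPolynomial.gradedAlgebra

variable {ι : Type} {k : Type u} [CommRing k]

theorem map_eq_pow_mul_of_isHomogeneous {R : Type*} [CommRing R] {f g : MvPolynomial ι k →+* R}
    {v : R} (hC : ∀ c, g (C c) = f (C c)) (hX : ∀ a, g (X a) = v * f (X a)) {n : ℕ}
    {p : MvPolynomial ι k} (hp : p.IsHomogeneous n) : g p = v ^ n * f p := by
  rw [p.as_sum, map_sum, map_sum, Finset.mul_sum]
  refine Finset.sum_congr rfl fun s hs => ?_
  have hdeg : ∑ i ∈ s.support, s i = n := by
    rw [← hp (mem_support_iff.mp hs), Finsupp.weight_apply, Finsupp.sum]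
    simp
  rw [monomial_eq, map_mul, map_mul, hC, Finsupp.prod, map_prod, map_prod]
  simp only [map_pow, hX, mul_pow]
  rw [Finset.prod_mul_distrib, Finset.prod_pow_eq_pow_sum, hdeg]
  ring

theorem X_mem_homogeneousSubmodule (i : ι) :
    (X i : MvPolynomial ι k) ∈ homogeneousSubmodule ι k 1 :=
  (mem_homogeneousSubmodule _ _).2 (isHomogeneous_X k i)

variable (k) in
/-- The ring of functions on the chart `X i ≠ 0` of projective space over `k`. -/
abbrev ChartRing (i : ι) : Type u := Away (homogeneousSubmodule ι k) (X i)

variable (k) in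
/-- The constants in the ring of functions on a chart of projective space. -/
def chartConst (i : ι) : k →+* ChartRing k i :=
  (fromZeroRingHom (homogeneousSubmodule ι k) _).comp
    (algebraMap k (homogeneousSubmodule ι k 0))

theorem val_chartConst (i : ι) (c : k) :
    (chartConst k i c).val = algebraMap (MvPolynomial ι k) (Localization.Away (X i)) (C c) := by
  change (HomogeneousLocalization.mk _).val = _
  rw [HomogeneousLocalization.val_mk, ← Localization.mk_one_eq_algebraMap]
  rfl

variable (k) in
/-- Dehomogenization of polynomials with respect to the variable `X i`. -/
def dehomogenize (i : ι) : MvPolynomial ι k →+* ChartRing k i :=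
  eval₂Hom (chartConst k i) fun a =>
    Away.mk (homogeneousSubmodule ι k) (X_mem_homogeneousSubmodule i) 1 (X a)
      (X_mem_homogeneousSubmodule a)

theorem dehomogenize_C (i : ι) (c : k) : dehomogenize k i (C c) = chartConst k i c := by
  simp [dehomogenize]

theorem dehomogenize_X (i a : ι) : dehomogenize k i (X a) =
    Away.mk (homogeneousSubmodule ι k) (X_mem_homogeneousSubmodule i) 1 (X a)
      (X_mem_homogeneousSubmodule a) := by
  simp [dehomogenize]

theorem dehomogenize_X_self (i : ι) : dehomogenize k i (X i) = 1 := by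
  rw [dehomogenize_X]
  apply HomogeneousLocalization.val_injective
  rw [Away.val_mk, HomogeneousLocalization.val_one]
  simp [Localization.mk_self_mk]

theorem dehomogenize_of_mem (i : ι) {n : ℕ} {p : MvPolynomial ι k}
    (hp : p ∈ homogeneousSubmodule ι k (n • 1)) :
    dehomogenize k i p =
      Away.mk (homogeneousSubmodule ι k) (X_mem_homogeneousSubmodule i) n p hp := by
  let toFrac := algebraMap (MvPolynomial ι k) (Localization.Away (X i : MvPolynomial ι k))
  have mul_mk (n : ℕ) (p : MvPolynomial ι k) :
      toFrac (X i) ^ n * (Localization.mk p ⟨X i ^ n, n, rfl⟩ : Localization.Away (X i)) =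
        toFrac p := by
    rw [← map_pow, ← Localization.mk_one_eq_algebraMap, ← Localization.mk_one_eq_algebraMap,
      Localization.mk_mul, Localization.mk_eq_mk_iff, Localization.r_iff_exists]
    exact ⟨1, by simp⟩
  have hscale : toFrac p = toFrac (X i) ^ (n • 1) * (dehomogenize k i p).val :=
    map_eq_pow_mul_of_isHomogeneous
      (f := (algebraMap (ChartRing k i) (Localization.Away (X i : MvPolynomial ι k))).comp
        (dehomogenize k i)) (g := toFrac)
      (fun c => by
        rw [RingHom.comp_apply, dehomogenize_C, HomogeneousLocalization.algebraMap_apply,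
          val_chartConst])
      (fun a => by
        rw [RingHom.comp_apply, dehomogenize_X, HomogeneousLocalization.algebraMap_apply,
          Away.val_mk, ← mul_mk 1 (X a), pow_one])
      ((mem_homogeneousSubmodule _ _).1 hp)
  have hu : IsUnit (toFrac (X i)) := IsLocalization.Away.algebraMap_isUnit _
  apply HomogeneousLocalization.val_injective
  rw [Away.val_mk]
  apply (hu.pow n).mul_left_cancel
  rw [mul_mk, hscale, smul_eq_mul, mul_one]

theorem dehomogenize_surjective (i : ι) : Function.Surjective (dehomogenize k i) := by
  intro z
  obtain ⟨n, p, hp, rfl⟩ :=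
    Away.mk_surjective (homogeneousSubmodule ι k) (X_mem_homogeneousSubmodule i) z
  exact ⟨p, dehomogenize_of_mem i hp⟩

variable (ι k) in
/-- Projective space over `k` with homogeneous coordinates indexed by `ι`. -/
abbrev projSpace : Scheme.{u} := Proj (homogeneousSubmodule ι k)

variable (ι k) in
/-- The structure morphism of projective space. -/
def projSpaceStr : projSpace ι k ⟶ Spec (CommRingCat.of k) :=
  Proj.toSpecZero (homogeneousSubmodule ι k) ≫
    Spec.map (CommRingCat.ofHom (algebraMap k (homogeneousSubmodule ι k 0)))

variable (k) in
/-- The open subscheme `X i ≠ 0` of projective space. -/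
def coordOpen (i : ι) : (projSpace ι k).Opens := Proj.basicOpen (homogeneousSubmodule ι k) (X i)

variable (k) in
/-- The affine chart `X i ≠ 0` of projective space, as a morphism. -/
abbrev chart (i : ι) : Spec (CommRingCat.of (ChartRing k i)) ⟶ projSpace ι k :=
  Proj.awayι (homogeneousSubmodule ι k) (X i) (X_mem_homogeneousSubmodule i) Nat.one_pos

theorem opensRange_chart (i : ι) : (chart k i).opensRange = coordOpen k i :=
  Proj.opensRange_awayι _ _ _ _

theorem chart_str (i : ι) :
    chart k i ≫ projSpaceStr ι k = Spec.map (CommRingCat.ofHom (chartConst k i)) := by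
  unfold projSpaceStr
  rw [Proj.awayι_toSpecZero_assoc, ← Spec.map_comp]
  rfl

variable (ι k) in
theorem iSup_coordOpen : ⨆ i : ι, coordOpen k i = ⊤ := by
  refine Proj.iSup_basicOpen_eq_top' (homogeneousSubmodule ι k) _
    (fun i => ⟨1, X_mem_homogeneousSubmodule i⟩) ?_
  rw [eq_top_iff]
  rintro p -
  induction p using MvPolynomial.induction_on with
  | C c =>
    exact (Algebra.adjoin (homogeneousSubmodule ι k 0)
      (Set.range fun i : ι => (X i : MvPolynomial ι k))).algebraMap_mem
      (⟨C c, isHomogeneous_C ι c⟩ : homogeneousSubmodule ι k 0)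
  | add p q hp hq => exact add_mem hp hq
  | mul_X p i hp => exact mul_mem hp (Algebra.subset_adjoin ⟨i, rfl⟩)

variable (ι k) in
/-- The cover of projective space by its affine charts. -/
def chartCover : (projSpace ι k).OpenCover where
  I₀ := ι
  X i := Spec (CommRingCat.of (ChartRing k i))
  f i := chart k i
  mem₀ := by
    rw [Scheme.presieve₀_mem_precoverage_iff]
    refine ⟨fun x => ?_, inferInstance⟩
    obtain ⟨i, hi⟩ := TopologicalSpace.Opens.mem_iSup.1
      (iSup_coordOpen ι k ▸ TopologicalSpace.Opens.mem_top x)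
    rw [← opensRange_chart] at hi
    exact ⟨i, hi⟩

theorem fromOfGlobalSections_projSpaceStr {T : Scheme.{u}} (f : MvPolynomial ι k →+* Γ(T, ⊤))
    (hf : (HomogeneousIdeal.irrelevant (homogeneousSubmodule ι k)).toIdeal.map f = ⊤) :
    Proj.fromOfGlobalSections (homogeneousSubmodule ι k) f hf ≫ projSpaceStr ι k =
      T.toSpecΓ ≫ Spec.map (CommRingCat.ofHom (f.comp C)) := by
  rw [projSpaceStr, Proj.fromOfGlobalSections_toSpecZero_assoc, ← Spec.map_comp]
  rfl

section HomogCoords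

variable {i j : ι} {T : Scheme.{u}} (φ : T ⟶ Spec (CommRingCat.of (ChartRing k i)))
  (ψ : T ⟶ Spec (CommRingCat.of (ChartRing k j)))

/-- The homogeneous coordinates, normalized by `X i ↦ 1`, of the morphism to projective space
that factors as `φ` through the chart `X i ≠ 0`. -/
def homogCoords : MvPolynomial ι k →+* Γ(T, ⊤) :=
  (globalSectionsHom φ).comp (dehomogenize k i)

theorem homogCoords_X_self : homogCoords φ (X i) = 1 := by
  rw [homogCoords, RingHom.comp_apply, dehomogenize_X_self, map_one]

theorem isUnit_homogCoords_X_self : IsUnit (homogCoords φ (X i)) :=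
  homogCoords_X_self φ ▸ isUnit_one

theorem homogCoords_comp {T' : Scheme.{u}} (g : T' ⟶ T) :
    homogCoords (g ≫ φ) = g.appTop.hom.comp (homogCoords φ) := by
  rw [homogCoords, homogCoords, globalSectionsHom_comp, RingHom.comp_assoc]

theorem homogCoords_comp_C :
    (homogCoords φ).comp C = globalSectionsHom (φ ≫ chart k i ≫ projSpaceStr ι k) := by
  rw [chart_str, globalSectionsHom_comp_SpecMap]
  ext c
  simp only [homogCoords, RingHom.comp_apply, dehomogenize_C]

theorem map_irrelevant_homogCoords :
    (HomogeneousIdeal.irrelevant (homogeneousSubmodule ι k)).toIdeal.map (homogCoords φ) = ⊤ :=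
  map_irrelevant_eq_top_of_isUnit _ (X_mem_homogeneousSubmodule i) Nat.one_pos
    (isUnit_homogCoords_X_self φ)

theorem comp_chart_eq_fromOfGlobalSections :
    φ ≫ chart k i = Proj.fromOfGlobalSections (homogeneousSubmodule ι k) (homogCoords φ)
      (map_irrelevant_homogCoords φ) := by
  have haway : globalSectionsHom φ =
      awayLift (homogeneousSubmodule ι k) (homogCoords φ) (isUnit_homogCoords_X_self φ) := by
    refine eq_awayLift _ _ _ (X_mem_homogeneousSubmodule i) _ fun n p hp => ?_
    rw [homogCoords_X_self, one_pow, mul_one, ← dehomogenize_of_mem]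
    rfl
  rw [fromOfGlobalSections_eq_awayLift_comp_awayι _ (X_mem_homogeneousSubmodule i) Nat.one_pos
    (isUnit_homogCoords_X_self φ), ← haway, ← Category.assoc, toSpecΓ_SpecMap_globalSectionsHom]

theorem awayMap_dehomogenize_X (i j a : ι) :
    awayMap (homogeneousSubmodule ι k) (X_mem_homogeneousSubmodule i) (mul_comm (X i) (X j))
        (dehomogenize k j (X a)) =
      awayMap (homogeneousSubmodule ι k) (X_mem_homogeneousSubmodule i) (mul_comm (X i) (X j))
          (dehomogenize k j (X i)) *
        awayMap (homogeneousSubmodule ι k) (X_mem_homogeneousSubmodule j) rfl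
          (dehomogenize k i (X a)) := by
  simp only [dehomogenize_X, awayMap_mk]
  apply HomogeneousLocalization.val_injective
  simp only [HomogeneousLocalization.val_mul, Away.val_mk, Localization.mk_mul]
  rw [Localization.mk_eq_mk_iff, Localization.r_iff_exists]
  exact ⟨1, by simp only [OneMemClass.coe_one, Submonoid.coe_mul]; ring⟩

variable {φ ψ} in
theorem homogCoords_X_eq_mul (h : φ ≫ chart k i = ψ ≫ chart k j) (a : ι) :
    homogCoords ψ (X a) = homogCoords ψ (X i) * homogCoords φ (X a) := by
  let χ : T ⟶ Spec (CommRingCat.of (Away (homogeneousSubmodule ι k) (X i * X j))) :=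
    pullback.lift φ ψ h ≫ (Proj.pullbackAwayιIso (homogeneousSubmodule ι k)
      (X_mem_homogeneousSubmodule i) Nat.one_pos (X_mem_homogeneousSubmodule j) Nat.one_pos rfl).hom
  have hφ : χ ≫ Spec.map (CommRingCat.ofHom
      (awayMap (homogeneousSubmodule ι k) (X_mem_homogeneousSubmodule j) rfl)) = φ := by
    simp only [χ, Category.assoc]
    rw [Proj.pullbackAwayιIso_hom_SpecMap_awayMap_left]
    exact pullback.lift_fst _ _ _
  have hψ : χ ≫ Spec.map (CommRingCat.ofHom (awayMap (homogeneousSubmodule ι k)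
      (X_mem_homogeneousSubmodule i) (mul_comm (X i) (X j)))) = ψ := by
    simp only [χ, Category.assoc]
    rw [Proj.pullbackAwayιIso_hom_SpecMap_awayMap_right]
    exact pullback.lift_snd _ _ _
  rw [← hφ, ← hψ]
  simp only [homogCoords, globalSectionsHom_comp_SpecMap, RingHom.comp_apply, ← map_mul,
    awayMap_dehomogenize_X i j a]

variable {φ ψ} in
theorem isUnit_homogCoords_X (h : φ ≫ chart k i = ψ ≫ chart k j) :
    IsUnit (homogCoords ψ (X i)) :=
  .of_mul_eq_one _ ((homogCoords_X_eq_mul h j).symm.trans (homogCoords_X_self ψ))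

end HomogCoords

end ProjectiveSpace

/-! ## The Segre embedding -/

theorem mem_subring_of_globalSectionsHom_mem {R S S' : Type u} [CommRing R] [CommRing S]
    [CommRing S'] {a : R →+* S} {b : R →+* S'}
    {ga : Spec (CommRingCat.of S) ⟶ Spec (CommRingCat.of R)}
    {gb : Spec (CommRingCat.of S') ⟶ Spec (CommRingCat.of R)}
    (hga : ga = Spec.map (CommRingCat.ofHom a)) (hgb : gb = Spec.map (CommRingCat.ofHom b))
    {Q : Subring Γ(pullback ga gb, ⊤)} (hfst : ∀ s, globalSectionsHom (pullback.fst ga gb) s ∈ Q)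
    (hsnd : ∀ s, globalSectionsHom (pullback.snd ga gb) s ∈ Q) (x : Γ(pullback ga gb, ⊤)) :
    x ∈ Q := by
  subst hga hgb
  let := a.toAlgebra
  let := b.toAlgebra
  obtain ⟨y, rfl⟩ := (globalSectionsHom_bijective (pullbackSpecIso R S S').hom).2 x
  induction y using TensorProduct.induction_on with
  | zero => rw [map_zero]; exact Q.zero_mem
  | add y z hy hz => rw [map_add]; exact Q.add_mem hy hz
  | tmul s t =>
    have hs : globalSectionsHom (pullback.fst (Spec.map (CommRingCat.ofHom a))
        (Spec.map (CommRingCat.ofHom b))) =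
        (globalSectionsHom (pullbackSpecIso R S S').hom).comp
          Algebra.TensorProduct.includeLeftRingHom := by
      rw [← globalSectionsHom_comp_SpecMap, pullbackSpecIso_hom_fst]
    have ht : globalSectionsHom (pullback.snd (Spec.map (CommRingCat.ofHom a))
        (Spec.map (CommRingCat.ofHom b))) =
        (globalSectionsHom (pullbackSpecIso R S S').hom).comp
          (Algebra.TensorProduct.includeRight : S' →ₐ[R] TensorProduct R S S').toRingHom := by
      rw [← globalSectionsHom_comp_SpecMap]
      exact congrArg globalSectionsHom (pullbackSpecIso_hom_snd R S S').symm
    have htmul : s ⊗ₜ[R] t = (s ⊗ₜ[R] (1 : S')) * ((1 : S) ⊗ₜ[R] t) := by simp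
    rw [htmul, map_mul]
    exact Q.mul_mem (RingHom.congr_fun hs s ▸ hfst s) (RingHom.congr_fun ht t ▸ hsnd t)

section Segre

open HomogeneousLocalization MvPolynomial

attribute [local instance] MvPolynomial.gradedAlgebra

variable {ι κ τ : Type} {k : Type u} [CommRing k]

variable (ε : τ ≃ ι × κ)

section SegreCoords

variable {R : Type*} [CommRing R] (f : MvPolynomial ι k →+* R) (g : MvPolynomial κ k →+* R)

/-- The products `x a * y b` of homogeneous coordinates `x = f`, `y = g`, as homogeneous coordinates
indexed by `τ ≃ ι × κ`. -/
def segreCoords : MvPolynomial τ k →+* R :=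
  eval₂Hom (f.comp C) fun l => f (X (ε l).1) * g (X (ε l).2)

theorem segreCoords_C (c : k) : segreCoords ε f g (C c) = f (C c) := by
  simp [segreCoords]

theorem segreCoords_X (l : τ) : segreCoords ε f g (X l) = f (X (ε l).1) * g (X (ε l).2) := by
  simp [segreCoords]

theorem comp_segreCoords {S : Type*} [CommRing S] (h : R →+* S) :
    h.comp (segreCoords ε f g) = segreCoords ε (h.comp f) (h.comp g) := by
  apply MvPolynomial.ringHom_ext <;> intro <;> simp [segreCoords]

end SegreCoords

section LocalSegre

variable {T : Scheme.{u}} {i i' : ι} {j j' : κ} (φ : T ⟶ Spec (CommRingCat.of (ChartRing k i)))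
  (ψ : T ⟶ Spec (CommRingCat.of (ChartRing k j)))

theorem segreCoords_homogCoords_X_symm :
    segreCoords ε (homogCoords φ) (homogCoords ψ) (X (ε.symm (i, j))) = 1 := by
  simp [segreCoords_X, homogCoords_X_self]

theorem isUnit_segreCoords_homogCoords :
    IsUnit (segreCoords ε (homogCoords φ) (homogCoords ψ) (X (ε.symm (i, j)))) :=
  segreCoords_homogCoords_X_symm ε φ ψ ▸ isUnit_one

theorem map_irrelevant_segreCoords_homogCoords :
    (HomogeneousIdeal.irrelevant (homogeneousSubmodule τ k)).toIdeal.map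
      (segreCoords ε (homogCoords φ) (homogCoords ψ)) = ⊤ :=
  map_irrelevant_eq_top_of_isUnit _ (X_mem_homogeneousSubmodule _) Nat.one_pos
    (isUnit_segreCoords_homogCoords ε φ ψ)

/-- The morphism to projective space whose homogeneous coordinates are the products of those of
`φ` and `ψ`, two morphisms to affine charts of projective spaces. -/
def localSegre : T ⟶ projSpace τ k :=
  Proj.fromOfGlobalSections (homogeneousSubmodule τ k)
    (segreCoords ε (homogCoords φ) (homogCoords ψ)) (map_irrelevant_segreCoords_homogCoords ε φ ψ)

theorem comp_localSegre {T' : Scheme.{u}} (g : T' ⟶ T) :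
    g ≫ localSegre ε φ ψ = localSegre ε (g ≫ φ) (g ≫ ψ) := by
  simp only [localSegre, comp_segreCoords, homogCoords_comp, comp_fromOfGlobalSections_of_isUnit _
    (X_mem_homogeneousSubmodule _) Nat.one_pos (isUnit_segreCoords_homogCoords ε φ ψ)]

theorem localSegre_str :
    localSegre ε φ ψ ≫ projSpaceStr τ k = φ ≫ chart k i ≫ projSpaceStr ι k := by
  have hC : (segreCoords ε (homogCoords φ) (homogCoords ψ)).comp C = (homogCoords φ).comp C :=
    RingHom.ext fun c => segreCoords_C ε _ _ c
  rw [localSegre, fromOfGlobalSections_projSpaceStr, hC, homogCoords_comp_C,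
    toSpecΓ_SpecMap_globalSectionsHom]

theorem localSegre_preimage_coordOpen (l : τ) :
    localSegre ε φ ψ ⁻¹ᵁ coordOpen k l =
      (φ ≫ chart k i) ⁻¹ᵁ coordOpen k (ε l).1 ⊓ (ψ ≫ chart k j) ⁻¹ᵁ coordOpen k (ε l).2 := by
  simp only [comp_chart_eq_fromOfGlobalSections, localSegre, coordOpen,
    Proj.fromOfGlobalSections_preimage_basicOpen _ _ _ Nat.one_pos (X_mem_homogeneousSubmodule _),
    segreCoords_X, Scheme.basicOpen_mul]

variable {φ ψ} {φ' : T ⟶ Spec (CommRingCat.of (ChartRing k i'))}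
  {ψ' : T ⟶ Spec (CommRingCat.of (ChartRing k j'))}

theorem localSegre_eq_localSegre (hφ : φ ≫ chart k i = φ' ≫ chart k i')
    (hψ : ψ ≫ chart k j = ψ' ≫ chart k j') : localSegre ε φ ψ = localSegre ε φ' ψ' := by
  have hC (c : k) : homogCoords φ' (C c) = homogCoords φ (C c) := by
    have hstr : φ ≫ chart k i ≫ projSpaceStr ι k = φ' ≫ chart k i' ≫ projSpaceStr ι k := by
      rw [← Category.assoc, hφ, Category.assoc]
    have h := (homogCoords_comp_C φ').trans
      ((congrArg globalSectionsHom hstr.symm).trans (homogCoords_comp_C φ).symm)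
    exact RingHom.congr_fun h c
  have hX (l : τ) : segreCoords ε (homogCoords φ') (homogCoords ψ') (X l) =
      (homogCoords φ' (X i) * homogCoords ψ' (X j)) *
        segreCoords ε (homogCoords φ) (homogCoords ψ) (X l) := by
    rw [segreCoords_X, segreCoords_X, homogCoords_X_eq_mul hφ, homogCoords_X_eq_mul hψ]
    ring
  have hunit : IsUnit (segreCoords ε (homogCoords φ') (homogCoords ψ') (X (ε.symm (i, j)))) := by
    rw [hX]
    exact ((isUnit_homogCoords_X hφ).mul (isUnit_homogCoords_X hψ)).mul
      (isUnit_segreCoords_homogCoords ε φ ψ)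
  have hscale (n : ℕ) (p : MvPolynomial τ k) (hp : p ∈ homogeneousSubmodule τ k n) :=
    map_eq_pow_mul_of_isHomogeneous (fun c => by rw [segreCoords_C, segreCoords_C, hC]) hX
      ((mem_homogeneousSubmodule _ _).1 hp)
  exact fromOfGlobalSections_eq_of_scale _ (X_mem_homogeneousSubmodule _) Nat.one_pos
    (isUnit_segreCoords_homogCoords ε φ ψ) _ hscale _ hunit

end LocalSegre

section SegreEmbedding

variable (k)

/-- The product of the charts `X i ≠ 0` and `Y j ≠ 0` of two projective spaces. -/
abbrev prodChart (i : ι) (j : κ) : Scheme.{u} :=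
  pullback (chart k i ≫ projSpaceStr ι k) (chart k j ≫ projSpaceStr κ k)

/-- The inclusion of a product of two charts into the product of the projective spaces. -/
def prodChartι (i : ι) (j : κ) :
    prodChart k i j ⟶ pullback (projSpaceStr ι k) (projSpaceStr κ k) :=
  pullback.map _ _ _ _ (chart k i) (chart k j) (𝟙 _) (Category.comp_id _) (Category.comp_id _)

variable (ι κ) in
/-- The cover of a product of two projective spaces by products of charts. -/
def prodChartCover : (pullback (projSpaceStr ι k) (projSpaceStr κ k)).OpenCover :=
  Scheme.Pullback.openCoverOfLeftRight (chartCover ι k) (chartCover κ k) _ _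

theorem prodChartι_fst (i : ι) (j : κ) :
    prodChartι k i j ≫ pullback.fst _ _ = pullback.fst _ _ ≫ chart k i :=
  pullback.lift_fst _ _ _

theorem prodChartι_snd (i : ι) (j : κ) :
    prodChartι k i j ≫ pullback.snd _ _ = pullback.snd _ _ ≫ chart k j :=
  pullback.lift_snd _ _ _

instance (i : ι) (j : κ) : IsOpenImmersion (prodChartι k i j) :=
  (prodChartCover ι κ k).map_prop (i, j)

theorem opensRange_prodChartι (i : ι) (j : κ) : (prodChartι k i j).opensRange =
    pullback.fst (projSpaceStr ι k) (projSpaceStr κ k) ⁻¹ᵁ coordOpen k i ⊓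
      pullback.snd (projSpaceStr ι k) (projSpaceStr κ k) ⁻¹ᵁ coordOpen k j := by
  rw [← opensRange_chart, ← opensRange_chart]
  ext1
  exact Scheme.Pullback.range_map _ _ _ _ (chart k i) (chart k j) (𝟙 _) (Category.comp_id _)
    (Category.comp_id _)

/-- The Segre map on a product of two charts. -/
abbrev segreOnChart (i : ι) (j : κ) : prodChart k i j ⟶ projSpace τ k :=
  localSegre ε (pullback.fst (chart k i ≫ projSpaceStr ι k) (chart k j ≫ projSpaceStr κ k))
    (pullback.snd (chart k i ≫ projSpaceStr ι k) (chart k j ≫ projSpaceStr κ k))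

theorem segreOnChart_compat (i i' : ι) (j j' : κ) :
    pullback.fst (prodChartι k i j) (prodChartι k i' j') ≫ segreOnChart k ε i j =
      pullback.snd (prodChartι k i j) (prodChartι k i' j') ≫ segreOnChart k ε i' j' := by
  rw [comp_localSegre, comp_localSegre]
  apply localSegre_eq_localSegre
  · simp only [Category.assoc, ← prodChartι_fst]
    rw [pullback.condition_assoc]
  · simp only [Category.assoc, ← prodChartι_snd]
    rw [pullback.condition_assoc]

/-- The Segre map from the product of two projective spaces, with target coordinates indexed by
`τ ≃ ι × κ`. -/
def segre : pullback (projSpaceStr ι k) (projSpaceStr κ k) ⟶ projSpace τ k :=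
  (prodChartCover ι κ k).glueMorphisms (fun ij => segreOnChart k ε ij.1 ij.2)
    fun ij ij' => segreOnChart_compat k ε ij.1 ij'.1 ij.2 ij'.2

theorem prodChartι_segre (i : ι) (j : κ) :
    prodChartι k i j ≫ segre k ε = segreOnChart k ε i j :=
  Scheme.Cover.ι_glueMorphisms (prodChartCover ι κ k) _ _ (i, j)

theorem segre_str : segre k ε ≫ projSpaceStr τ k = pullback.fst _ _ ≫ projSpaceStr ι k := by
  have on_chart (i : ι) (j : κ) : prodChartι k i j ≫ segre k ε ≫ projSpaceStr τ k =
      prodChartι k i j ≫ pullback.fst _ _ ≫ projSpaceStr ι k := by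
    rw [← Category.assoc, prodChartι_segre, localSegre_str, ← Category.assoc, ← prodChartι_fst,
      Category.assoc]
  exact Scheme.Cover.hom_ext (prodChartCover ι κ k) _ _ fun ij => on_chart ij.1 ij.2

theorem segre_preimage_coordOpen (l : τ) : segre k ε ⁻¹ᵁ coordOpen k l =
    (prodChartι k (ε l).1 (ε l).2).opensRange := by
  have on_chart (i : ι) (j : κ) : prodChartι k i j ⁻¹ᵁ segre k ε ⁻¹ᵁ coordOpen k l =
      prodChartι k i j ⁻¹ᵁ (prodChartι k (ε l).1 (ε l).2).opensRange := by
    rw [← Scheme.Hom.comp_preimage, prodChartι_segre, localSegre_preimage_coordOpen,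
      ← prodChartι_fst, ← prodChartι_snd, opensRange_prodChartι]
    rfl
  ext x
  obtain ⟨⟨i, j⟩, y, rfl⟩ := (prodChartCover ι κ k).exists_eq x
  exact (congrArg (fun W : (prodChart k i j).Opens => y ∈ W) (on_chart i j)).to_iff

/-- The ring homomorphism defining the Segre map between the corresponding affine charts. -/
def segreAwayHom (i : ι) (j : κ) : ChartRing k (ε.symm (i, j)) →+* Γ(prodChart k i j, ⊤) :=
  awayLift (homogeneousSubmodule τ k) _ (isUnit_segreCoords_homogCoords ε (pullback.fst _ _)
    (pullback.snd (chart k i ≫ projSpaceStr ι k) (chart k j ≫ projSpaceStr κ k)))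

theorem prodChartι_segre_eq_comp_chart (i : ι) (j : κ) :
    prodChartι k i j ≫ segre k ε =
      ((prodChart k i j).toSpecΓ ≫ Spec.map (CommRingCat.ofHom (segreAwayHom k ε i j))) ≫
        chart k (ε.symm (i, j)) := by
  rw [prodChartι_segre, Category.assoc]
  exact fromOfGlobalSections_eq_awayLift_comp_awayι ..

theorem segreCoords_mem_range_segreAwayHom (i : ι) (j : κ) {n : ℕ} {p : MvPolynomial τ k}
    (hp : p.IsHomogeneous n) :
    segreCoords ε (homogCoords (pullback.fst _ _)) (homogCoords (pullback.snd
      (chart k i ≫ projSpaceStr ι k) (chart k j ≫ projSpaceStr κ k))) p ∈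
      (segreAwayHom k ε i j).range := by
  have hp' : p ∈ homogeneousSubmodule τ k (n • 1) := by
    rwa [smul_eq_mul, mul_one, mem_homogeneousSubmodule]
  have h := awayLift_mk_mul_pow (homogeneousSubmodule τ k) _ (isUnit_segreCoords_homogCoords ε
    (pullback.fst _ _) (pullback.snd (chart k i ≫ projSpaceStr ι k) (chart k j ≫ projSpaceStr κ k)))
    (X_mem_homogeneousSubmodule _) n p hp'
  rw [segreCoords_homogCoords_X_symm, one_pow, mul_one] at h
  exact ⟨_, h⟩

theorem globalSectionsHom_mem_of_homogCoords_mem {T : Scheme.{u}} {i : ι}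
    (φ : T ⟶ Spec (CommRingCat.of (ChartRing k i))) {Q : Subring Γ(T, ⊤)}
    (hC : ∀ c, homogCoords φ (C c) ∈ Q) (hX : ∀ a, homogCoords φ (X a) ∈ Q) (s : ChartRing k i) :
    globalSectionsHom φ s ∈ Q := by
  obtain ⟨p, rfl⟩ := dehomogenize_surjective i s
  change homogCoords φ p ∈ Q
  induction p using MvPolynomial.induction_on with
  | C c => exact hC c
  | add p q hp hq => rw [map_add]; exact add_mem hp hq
  | mul_X p a hp => rw [map_mul]; exact mul_mem hp (hX a)

theorem segreAwayHom_surjective (i : ι) (j : κ) :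
    Function.Surjective (segreAwayHom k ε i j) := by
  let p := pullback.fst (chart k i ≫ projSpaceStr ι k) (chart k j ≫ projSpaceStr κ k)
  let q := pullback.snd (chart k i ≫ projSpaceStr ι k) (chart k j ≫ projSpaceStr κ k)
  have hCp (c : k) : homogCoords p (C c) ∈ (segreAwayHom k ε i j).range :=
    segreCoords_C ε (homogCoords p) (homogCoords q) c ▸
      segreCoords_mem_range_segreAwayHom k ε i j (isHomogeneous_C τ c)
  have hCq (c : k) : homogCoords q (C c) ∈ (segreAwayHom k ε i j).range := by
    have h := (homogCoords_comp_C q).trans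
      ((congrArg globalSectionsHom pullback.condition.symm).trans (homogCoords_comp_C p).symm)
    exact RingHom.congr_fun h.symm c ▸ hCp c
  have hXX (a : ι) (b : κ) :
      homogCoords p (X a) * homogCoords q (X b) ∈ (segreAwayHom k ε i j).range := by
    have h := segreCoords_mem_range_segreAwayHom k ε i j (isHomogeneous_X k (ε.symm (a, b)))
    rwa [segreCoords_X, ε.apply_symm_apply] at h
  refine RingHom.range_eq_top.1 (eq_top_iff.2 fun x _ =>
    mem_subring_of_globalSectionsHom_mem (chart_str i) (chart_str j)
      (globalSectionsHom_mem_of_homogCoords_mem k p hCp fun a => ?_)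
      (globalSectionsHom_mem_of_homogCoords_mem k q hCq fun b => ?_) x)
  · simpa [homogCoords_X_self] using hXX a j
  · simpa [homogCoords_X_self] using hXX i b

theorem isClosedImmersion_toSpecΓ_SpecMap_segreAwayHom (i : ι) (j : κ) : IsClosedImmersion
    ((prodChart k i j).toSpecΓ ≫ Spec.map (CommRingCat.ofHom (segreAwayHom k ε i j))) := by
  have := IsClosedImmersion.spec_of_surjective (CommRingCat.ofHom (segreAwayHom k ε i j))
    (segreAwayHom_surjective k ε i j)
  infer_instance

theorem isClosedImmersion_segre : IsClosedImmersion (segre k ε) := by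
  apply IsZariskiLocalAtTarget.of_openCover (chartCover τ k)
  suffices h : ∀ i j, IsClosedImmersion (pullback.snd (segre k ε) (chart k (ε.symm (i, j)))) by
    intro l
    obtain ⟨⟨i, j⟩, rfl⟩ := ε.symm.surjective l
    exact h i j
  intro i j
  have isPullback := IsOpenImmersion.isPullback _ (prodChartι k i j) (chart k (ε.symm (i, j)))
    (segre k ε) (prodChartι_segre_eq_comp_chart k ε i j) (by
      rw [opensRange_chart, segre_preimage_coordOpen, Equiv.apply_symm_apply])
  have := isClosedImmersion_toSpecΓ_SpecMap_segreAwayHom k ε i j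
  rw [← isPullback.flip.isoPullback_inv_snd]
  infer_instance

end SegreEmbedding

end Segre

/-! ## The projective line -/

section ProjectiveLine

open HomogeneousLocalization MvPolynomial

attribute [local instance] MvPolynomial.gradedAlgebra

section LineChart

variable {k : Type u} [CommRing k]

theorem awayLift_comp_dehomogenize {ι : Type} {R : Type u} [CommRing R] (f : MvPolynomial ι k →+* R)
    {j : ι} (hf : f (X j) = 1) (hu : IsUnit (f (X j))) :
    (awayLift (homogeneousSubmodule ι k) f hu).comp (dehomogenize k j) = f := by
  have apply_of_mem {n : ℕ} {p : MvPolynomial ι k} (hp : p ∈ homogeneousSubmodule ι k (n • 1)) :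
      awayLift (homogeneousSubmodule ι k) f hu (dehomogenize k j p) = f p := by
    have h := awayLift_mk_mul_pow _ f hu (X_mem_homogeneousSubmodule j) n p hp
    rwa [hf, one_pow, mul_one, ← dehomogenize_of_mem] at h
  exact MvPolynomial.ringHom_ext (fun c => apply_of_mem (n := 0) (isHomogeneous_C ι c))
    fun a => apply_of_mem (n := 1) (X_mem_homogeneousSubmodule a)

variable (k) in
/-- The polynomial ring in the remaining coordinate is the ring of functions on the chart `X j ≠ 0`
of the projective line. -/
def lineChartEquiv (j : Fin 2) : Polynomial k ≃+* ChartRing k j :=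
  let lineCoords : MvPolynomial (Fin 2) k →+* Polynomial k :=
    eval₂Hom Polynomial.C fun a => if a = j then 1 else Polynomial.X
  have hone : lineCoords (X j) = 1 := by simp [lineCoords]
  have hlift := awayLift_comp_dehomogenize lineCoords hone (hone ▸ isUnit_one)
  RingEquiv.ofRingHom
    (Polynomial.eval₂RingHom (chartConst k j) (dehomogenize k j (X (1 - j))))
    (awayLift (homogeneousSubmodule (Fin 2) k) lineCoords (hone ▸ isUnit_one))
    (by
      rw [← RingHom.cancel_right (dehomogenize_surjective j), RingHom.comp_assoc, hlift,
        RingHom.id_comp]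
      refine MvPolynomial.ringHom_ext (fun c => ?_) fun a => ?_
      · simp [lineCoords, dehomogenize_C]
      · by_cases ha : a = j
        · simp [lineCoords, ha, dehomogenize_X_self]
        · simp [lineCoords, show a = 1 - j by omega, show 1 - j ≠ j by omega])
    (by
      refine Polynomial.ringHom_ext (fun c => ?_) ?_
      · simpa [lineCoords, dehomogenize_C] using RingHom.congr_fun hlift (C c)
      · simpa [lineCoords, show 1 - j ≠ j by omega] using RingHom.congr_fun hlift (X (1 - j)))

theorem lineChartEquiv_C (j : Fin 2) (c : k) :
    lineChartEquiv k j (Polynomial.C c) = chartConst k j c :=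
  Polynomial.eval₂_C _ _

theorem lineChartEquiv_X (j : Fin 2) :
    lineChartEquiv k j Polynomial.X = dehomogenize k j (X (1 - j)) :=
  Polynomial.eval₂_X _ _

variable (k) in
/-- The embedding `𝔸¹ ⟶ ℙ¹` onto the chart `X j ≠ 0`. -/
def lineChart (j : Fin 2) : Spec (CommRingCat.of (Polynomial k)) ⟶ projSpace (Fin 2) k :=
  Spec.map (CommRingCat.ofHom (lineChartEquiv k j).symm.toRingHom) ≫ chart k j

instance isIso_specMap_lineChartEquiv_symm (j : Fin 2) :
    IsIso (Spec.map (CommRingCat.ofHom (lineChartEquiv k j).symm.toRingHom)) :=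
  inferInstanceAs (IsIso (Spec.map (lineChartEquiv k j).symm.toCommRingCatIso.hom))

instance isOpenImmersion_lineChart (j : Fin 2) : IsOpenImmersion (lineChart k j) := by
  unfold lineChart
  infer_instance

theorem opensRange_lineChart (j : Fin 2) : (lineChart k j).opensRange = coordOpen k j := by
  unfold lineChart
  rw [Scheme.Hom.opensRange_comp_of_isIso, opensRange_chart]

theorem lineChart_preimage_coordOpen (j : Fin 2) :
    lineChart k j ⁻¹ᵁ coordOpen k (1 - j) = PrimeSpectrum.basicOpen Polynomial.X := by
  have hcoord : homogCoords (Spec.map (CommRingCat.ofHom (lineChartEquiv k j).symm.toRingHom))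
      (X (1 - j)) =
      (Scheme.ΓSpecIso (CommRingCat.of (Polynomial k))).inv.hom Polynomial.X := by
    rw [homogCoords, ← Category.id_comp (Spec.map _), globalSectionsHom_comp_SpecMap,
      RingHom.comp_apply, RingHom.comp_apply, ← lineChartEquiv_X]
    simp [globalSectionsHom]
  rw [lineChart, comp_chart_eq_fromOfGlobalSections, coordOpen,
    Proj.fromOfGlobalSections_preimage_basicOpen _ _ _ Nat.one_pos (X_mem_homogeneousSubmodule _),
    hcoord]
  exact basicOpen_eq_of_affine (R := CommRingCat.of (Polynomial k)) Polynomial.X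

variable (k) in
/-- The cover of the projective line by its two affine lines. -/
def lineChartCover : (projSpace (Fin 2) k).OpenCover where
  I₀ := Fin 2
  X _ := Spec (CommRingCat.of (Polynomial k))
  f j := lineChart k j
  mem₀ := by
    rw [Scheme.presieve₀_mem_precoverage_iff]
    refine ⟨fun x => ?_, inferInstance⟩
    obtain ⟨j, hj⟩ := TopologicalSpace.Opens.mem_iSup.1
      (iSup_coordOpen (Fin 2) k ▸ TopologicalSpace.Opens.mem_top x)
    rw [← opensRange_lineChart] at hj
    exact ⟨j, hj⟩

instance isSeparated_projSpaceStr (ι : Type) : IsSeparated (projSpaceStr ι k) := by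
  unfold projSpaceStr
  infer_instance

instance quasiCompact_projSpaceStr_finTwo : QuasiCompact (projSpaceStr (Fin 2) k) := by
  have : Finite (lineChartCover k).I₀ := inferInstanceAs (Finite (Fin 2))
  have (j : (lineChartCover k).I₀) : CompactSpace ((lineChartCover k).X j) :=
    inferInstanceAs (CompactSpace (Spec (CommRingCat.of (Polynomial k))))
  rw [quasiCompact_iff_compactSpace]
  exact Scheme.OpenCover.compactSpace (lineChartCover k)

end LineChart

variable {k : Type u} [Field k]

theorem lineChart_str (j : Fin 2) : lineChart k j ≫ projSpaceStr (Fin 2) k = affineLineStr k := by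
  rw [lineChart, Category.assoc, chart_str, ← Spec.map_comp, ← CommRingCat.ofHom_comp]
  congr 2
  refine RingHom.ext fun c => ?_
  exact (RingEquiv.symm_apply_eq _).2 (lineChartEquiv_C j c).symm

instance smooth_projSpaceStr_finTwo : Smooth (projSpaceStr (Fin 2) k) := by
  have : IsZariskiLocalAtSource @Smooth.{u} := HasRingHomProperty.instIsZariskiLocalAtSource
  apply IsZariskiLocalAtSource.of_openCover (P := @Smooth.{u}) (lineChartCover k)
  exact fun j : Fin 2 => (lineChart_str (k := k) j).symm ▸ smooth_affineLineStr

variable (k) in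
theorem nonempty_coordOpen_inter_coordOpen :
    ((coordOpen k (0 : Fin 2) : Set (projSpace (Fin 2) k)) ∩ coordOpen k (1 : Fin 2)).Nonempty := by
  have hgeneric : (⊥ : PrimeSpectrum (Polynomial k)) ∈ lineChart k 1 ⁻¹ᵁ coordOpen k (1 - 1) := by
    rw [lineChart_preimage_coordOpen]
    exact Polynomial.X_ne_zero
  exact ⟨_, hgeneric, opensRange_lineChart (k := k) 1 ▸ Set.mem_range_self _⟩

variable (k) in
/-- The rational point `X 0 = 0` of the projective line. -/
def lineInfinity : Spec (CommRingCat.of k) ⟶ projSpace (Fin 2) k :=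
  Spec.map (CommRingCat.ofHom (Polynomial.evalRingHom 0)) ≫ lineChart k 1

variable (k) in
theorem lineInfinity_str : lineInfinity k ≫ projSpaceStr (Fin 2) k = 𝟙 _ := by
  rw [lineInfinity, Category.assoc, lineChart_str, ← Spec.map_comp, ← CommRingCat.ofHom_comp,
    ← Spec.map_id]
  congr 2
  ext c
  simp

theorem range_comap_evalRingHom_zero :
    Set.range (PrimeSpectrum.comap (Polynomial.evalRingHom (0 : k))) =
      (PrimeSpectrum.basicOpen (Polynomial.X : Polynomial k) : Set (PrimeSpectrum _))ᶜ := by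
  rw [range_comap_of_surjective _ _ fun c => ⟨.C c, by simp⟩, Polynomial.ker_evalRingHom, map_zero,
    sub_zero, PrimeSpectrum.zeroLocus_span, PrimeSpectrum.basicOpen_eq_zeroLocus_compl, compl_compl]

variable (k) in
theorem range_lineInfinity :
    Set.range (lineInfinity k) = (coordOpen k (0 : Fin 2) : Set (projSpace (Fin 2) k))ᶜ := by
  have range_eval : Set.range (Spec.map (CommRingCat.ofHom (Polynomial.evalRingHom (0 : k)))) =
      (lineChart k 1 ⁻¹' coordOpen k (0 : Fin 2))ᶜ :=
    range_comap_evalRingHom_zero.trans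
      (congrArg (fun V => (SetLike.coe V)ᶜ) (lineChart_preimage_coordOpen (k := k) 1).symm)
  have compl_subset : (coordOpen k (0 : Fin 2) : Set (projSpace (Fin 2) k))ᶜ ⊆
      Set.range (lineChart k 1) := by
    intro y hy
    obtain ⟨j, hj⟩ := TopologicalSpace.Opens.mem_iSup.1
      (iSup_coordOpen (Fin 2) k ▸ TopologicalSpace.Opens.mem_top y)
    rw [← Scheme.Hom.coe_opensRange, opensRange_lineChart]
    fin_cases j
    · exact absurd hj hy
    · exact hj
  rw [lineInfinity, Scheme.Hom.comp_base, TopCat.coe_comp, Set.range_comp, range_eval,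
    ← Set.preimage_compl, Set.image_preimage_eq_iff.2 compl_subset]

end ProjectiveLine

/-! ## The product with the projective line -/

theorem irreducibleSpace_of_isIrreducible_of_union_eq_univ {T : Type*} [TopologicalSpace T]
    {S S' : Set T} (hSo : IsOpen S) (hS : IsIrreducible S) (hS' : IsIrreducible S')
    (hne : (S ∩ S').Nonempty) (hunion : S ∪ S' = Set.univ) : IrreducibleSpace T := by
  have subset_closure_S : S' ⊆ closure S :=
    (subset_closure_inter_of_isPreirreducible_of_isOpen hS'.2 hSo (Set.inter_comm S S' ▸ hne)).trans
      (closure_mono Set.inter_subset_right)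
  have closure_S : closure S = Set.univ :=
    Set.univ_subset_iff.1 (hunion ▸ Set.union_subset subset_closure subset_closure_S)
  rw [irreducibleSpace_def, Set.top_eq_univ, ← closure_S]
  exact hS.closure

section ProdProjLine

variable {k : Type u} [Field k] {X : Scheme.{u}} (x : X ⟶ Spec (CommRingCat.of k))

/-- The product `X × ℙ¹` of a scheme over `k` with the projective line. -/
abbrev prodProjLine : Scheme.{u} := pullback x (projSpaceStr (Fin 2) k)

theorem exists_isClosedImmersion_prodProjLine {x} {N : ℕ} {i : X ⟶ projSpace (Fin (N + 1)) k}
    (hi : IsClosedImmersion i) (hix : i ≫ projSpaceStr (Fin (N + 1)) k = x) :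
    ∃ (M : ℕ) (j : prodProjLine x ⟶ projSpace (Fin (M + 1)) k), IsClosedImmersion j ∧
      j ≫ projSpaceStr (Fin (M + 1)) k = pullback.fst _ _ ≫ x := by
  let ε : Fin ((2 * N + 1) + 1) ≃ Fin (N + 1) × Fin 2 :=
    (finCongr (by ring)).trans finProdFinEquiv.symm
  let m : prodProjLine x ⟶ pullback (projSpaceStr (Fin (N + 1)) k) (projSpaceStr (Fin 2) k) :=
    pullback.map _ _ _ _ i (𝟙 _) (𝟙 _) (by simp [hix]) (by simp)
  have : MorphismProperty.IsStableUnderComposition @IsClosedImmersion.{u} :=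
    MorphismProperty.IsMultiplicative.toIsStableUnderComposition
  have hm : IsClosedImmersion m :=
    MorphismProperty.pullbackMap (P := @IsClosedImmersion.{u}) hi inferInstance hix.symm
      (Category.id_comp _).symm
  have := isClosedImmersion_segre k ε
  refine ⟨2 * N + 1, m ≫ segre k ε, inferInstance, ?_⟩
  rw [Category.assoc, segre_str, pullback.lift_fst_assoc, Category.assoc, hix]

/-- The embedding `X × 𝔸¹ ⟶ X × ℙ¹` onto the locus where the `j`-th coordinate is nonzero. -/
def prodLineChart (j : Fin 2) : pullback x (affineLineStr k) ⟶ prodProjLine x :=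
  pullback.map _ _ _ _ (𝟙 _) (lineChart k j) (𝟙 _) (by simp) (by simp [lineChart_str])

instance isOpenImmersion_prodLineChart (j : Fin 2) : IsOpenImmersion (prodLineChart x j) :=
  MorphismProperty.pullbackMap (P := @IsOpenImmersion) inferInstance inferInstance
    (Category.id_comp _).symm (lineChart_str j).symm

theorem prodLineChart_fst (j : Fin 2) :
    prodLineChart x j ≫ pullback.fst _ _ = pullback.fst _ _ :=
  (pullback.lift_fst _ _ _).trans (Category.comp_id _)

theorem range_prodLineChart (j : Fin 2) : Set.range (prodLineChart x j) =
    pullback.snd x (projSpaceStr (Fin 2) k) ⁻¹' coordOpen k j := by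
  rw [prodLineChart, Scheme.Pullback.range_map, ← Scheme.Hom.coe_opensRange (lineChart k j),
    opensRange_lineChart]
  simp

/-- The cover of `X × ℙ¹` by its two charts `X × 𝔸¹`. -/
def prodLineCover : (prodProjLine x).OpenCover where
  I₀ := Fin 2
  X _ := pullback x (affineLineStr k)
  f j := prodLineChart x j
  mem₀ := by
    rw [Scheme.presieve₀_mem_precoverage_iff]
    refine ⟨fun p => ?_, inferInstance⟩
    obtain ⟨j, hj⟩ := TopologicalSpace.Opens.mem_iSup.1
      (iSup_coordOpen (Fin 2) k ▸ TopologicalSpace.Opens.mem_top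
        (pullback.snd x (projSpaceStr (Fin 2) k) p))
    exact ⟨j, (range_prodLineChart x j).symm ▸ hj⟩

theorem isReduced_prodProjLine [IsReduced X] : IsReduced (prodProjLine x) :=
  have (j : (prodLineCover x).I₀) : IsReduced ((prodLineCover x).X j) :=
    isReduced_pullback_affineLine x
  IsReduced.of_openCover _ (prodLineCover x)

theorem topologicalKrullDim_prodProjLine [LocallyOfFiniteType x] :
    topologicalKrullDim ↥(prodProjLine x) = topologicalKrullDim X + 1 := by
  have : Nonempty (prodLineCover x).I₀ := inferInstanceAs (Nonempty (Fin 2))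
  rw [topologicalKrullDim_eq_iSup_openCover (prodLineCover x),
    ← topologicalKrullDim_pullback_affineLine x]
  exact iSup_const (a := topologicalKrullDim ↥(pullback x (affineLineStr k)))

theorem irreducibleSpace_prodProjLine [IrreducibleSpace X] :
    IrreducibleSpace ↥(prodProjLine x) := by
  have := irreducibleSpace_pullback_affineLine x
  have chart_irreducible (j : Fin 2) : IsIrreducible (Set.range (prodLineChart x j)) := by
    rw [← Set.image_univ]
    exact (IrreducibleSpace.isIrreducible_univ _).image _
      (prodLineChart x j).continuous.continuousOn
  have : Surjective x := ⟨Function.surjective_to_subsingleton _⟩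
  have snd_surjective := (pullback.snd x (projSpaceStr (Fin 2) k)).surjective
  refine irreducibleSpace_of_isIrreducible_of_union_eq_univ
    (prodLineChart x 0).isOpenEmbedding.isOpen_range (chart_irreducible 0) (chart_irreducible 1)
    ?_ (Set.eq_univ_of_forall fun p => ?_)
  · rw [range_prodLineChart, range_prodLineChart, ← Set.preimage_inter]
    exact (nonempty_coordOpen_inter_coordOpen k).preimage snd_surjective
  · exact Fin.exists_fin_two.1 ((prodLineCover x).exists_eq p)

/-- The section `X ⟶ X × ℙ¹` at infinity. -/
def infinitySection : X ⟶ prodProjLine x :=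
  pullback.lift (𝟙 X) (x ≫ lineInfinity k) (by simp [lineInfinity_str])

theorem infinitySection_fst : infinitySection x ≫ pullback.fst _ _ = 𝟙 X :=
  pullback.lift_fst _ _ _

instance isClosedImmersion_infinitySection : IsClosedImmersion (infinitySection x) := by
  have : IsClosedImmersion (infinitySection x ≫ pullback.fst x (projSpaceStr (Fin 2) k)) := by
    rw [infinitySection_fst]
    infer_instance
  exact IsClosedImmersion.of_comp _ (pullback.fst x (projSpaceStr (Fin 2) k))

theorem range_infinitySection :
    Set.range (infinitySection x) = (Set.range (prodLineChart x 0))ᶜ := by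
  have isPullback : IsPullback (infinitySection x) x
      (pullback.snd x (projSpaceStr (Fin 2) k)) (lineInfinity k) := by
    refine IsPullback.of_right ?_ (pullback.lift_snd _ _ _) (IsPullback.of_hasPullback _ _)
    rw [infinitySection_fst, lineInfinity_str]
    exact IsPullback.of_horiz_isIso ⟨by simp⟩
  rw [range_prodLineChart, ← Set.preimage_compl, ← range_lineInfinity,
    ← Scheme.Pullback.range_fst, ← isPullback.isoPullback_hom_fst, Scheme.Hom.comp_base,
    TopCat.coe_comp]
  exact (Scheme.homeoOfIso isPullback.isoPullback).surjective.range_comp _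

end ProdProjLine

/-! ## Classes of closed complements -/

theorem exists_comp_eq_of_range_subset {Y Z P : Scheme.{u}} [IsReduced Y] {f : Y ⟶ P} {i : Z ⟶ P}
    [IsClosedImmersion i] (h : Set.range f ⊆ Set.range i) : ∃ g : Y ⟶ Z, g ≫ i = f := by
  have : Surjective (pullback.fst f i) := by
    rw [surjective_iff, ← Set.range_eq_univ, Scheme.Pullback.range_fst]
    exact Set.eq_univ_of_forall fun y => h ⟨y, rfl⟩
  have : IsIso (pullback.fst f i) := isIso_of_isClosedImmersion_of_surjective _
  refine ⟨inv (pullback.fst f i) ≫ pullback.snd f i, ?_⟩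
  rw [Category.assoc, ← pullback.condition, IsIso.inv_hom_id_assoc]

theorem isOpenImmersion_of_comp_eq_comp {Y Z T P : Scheme.{u}} [IsReduced Y] {b : Z ⟶ Y}
    {i : Y ⟶ P} {z : Z ⟶ T} {J : T ⟶ P} [IsClosedImmersion z] [IsClosedImmersion i]
    [IsOpenImmersion J] (h : b ≫ i = z ≫ J) (hrange : J ⁻¹' Set.range i ⊆ Set.range z) :
    IsOpenImmersion b := by
  let c : Z ⟶ pullback i J := pullback.lift b z h
  have hcz : c ≫ pullback.snd i J = z := pullback.lift_snd _ _ _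
  have : IsClosedImmersion c :=
    have : IsClosedImmersion (c ≫ pullback.snd i J) := hcz ▸ inferInstance
    IsClosedImmersion.of_comp c (pullback.snd i J)
  have : Surjective c := by
    refine ⟨fun p => ?_⟩
    obtain ⟨q, hq⟩ := hrange (Scheme.Pullback.range_snd i J ▸ Set.mem_range_self p)
    refine ⟨q, (pullback.snd i J).isClosedEmbedding.injective ?_⟩
    rw [← Scheme.Hom.comp_apply, hcz, hq]
  have : IsReduced (pullback i J) := isReduced_of_isOpenImmersion (pullback.fst i J)
  have : IsIso c := isIso_of_isClosedImmersion_of_surjective _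
  rw [← pullback.lift_fst b z h]
  exact inferInstanceAs (IsOpenImmersion (c ≫ pullback.fst i J))

theorem range_eq_preimage_range_of_comp_eq {X Y P : Scheme.{u}} {g : X ⟶ Y} {i : Y ⟶ P} {f : X ⟶ P}
    [IsClosedImmersion i] (h : g ≫ i = f) : Set.range g = i ⁻¹' Set.range f := by
  rw [← h, Scheme.Hom.comp_base, TopCat.coe_comp, Set.range_comp,
    Set.preimage_image_eq _ i.isClosedEmbedding.injective]

section Complement

variable {k : Type u} [Field k]

theorem cls_eq_cls_add_cls {Q : Variety k → Prop} {Y X Z : Variety k} (hY : Q Y) (hX : Q X)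
    (hZ : Q Z) {a : X.toScheme ⟶ Y.toScheme} {b : Z.toScheme ⟶ Y.toScheme}
    (ha : IsClosedImmersion a) (hb : IsOpenImmersion b) (hastr : a ≫ Y.str = X.str)
    (hbstr : b ≫ Y.str = Z.str) (hrange : Set.range b = (Set.range a)ᶜ) :
    K0.cls Y hY = K0.cls X hX + K0.cls Z hZ := by
  rw [← sub_eq_zero, ← sub_sub]
  exact (QuotientAddGroup.eq_zero_iff _).2 (AddSubgroup.subset_closure
    (Or.inr ⟨⟨Y, hY⟩, ⟨X, hX⟩, ⟨Z, hZ⟩, a, b, ha, hb, hastr, hbstr, hrange, rfl⟩))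

theorem cls_complement_image {Q : Variety k → Prop} {P X T Z Y : Variety k}
    {s : X.toScheme ⟶ P.toScheme} {J : T.toScheme ⟶ P.toScheme} [IsClosedImmersion s]
    [IsOpenImmersion J] (hs : s ≫ P.str = X.str) (hJ : J ≫ P.str = T.str)
    (hsJ : Set.range s = (Set.range J)ᶜ) {U : T.toScheme.Opens} (hZU : IsComplementOf Z T U)
    (hYU : IsComplementOf Y P (J ''ᵁ U)) (hY : Q Y) (hX : Q X) (hZ : Q Z) :
    K0.cls Y hY = K0.cls X hX + K0.cls Z hZ := by
  obtain ⟨z, hz, hzstr, hzU : Set.range z = _⟩ := hZU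
  obtain ⟨i, hi, histr, hiU : Set.range i = (J '' U)ᶜ⟩ := hYU
  have := X.reduced
  have := Y.reduced
  have := Z.reduced
  have hJ_inj : Function.Injective J := J.isOpenEmbedding.injective
  have range_zJ : Set.range (z ≫ J) = Set.range J \ J '' U := by
    rw [Scheme.Hom.comp_base, TopCat.coe_comp, Set.range_comp, hzU, Set.range_sdiff_image hJ_inj]
  obtain ⟨a, ha⟩ : ∃ a : X.toScheme ⟶ Y.toScheme, a ≫ i = s :=
    exists_comp_eq_of_range_subset (by
      rw [hsJ, hiU]
      exact Set.compl_subset_compl.2 (Set.image_subset_range _ _))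
  obtain ⟨b, hb⟩ : ∃ b : Z.toScheme ⟶ Y.toScheme, b ≫ i = z ≫ J :=
    exists_comp_eq_of_range_subset (by
      rw [range_zJ, hiU]
      exact Set.sdiff_subset_compl _ _)
  have a_closed : IsClosedImmersion a :=
    have : IsClosedImmersion (a ≫ i) := ha ▸ inferInstance
    IsClosedImmersion.of_comp a i
  have b_open : IsOpenImmersion b := isOpenImmersion_of_comp_eq_comp hb (by
    rw [hiU, hzU, Set.preimage_compl, Set.preimage_image_eq _ hJ_inj])
  refine cls_eq_cls_add_cls hY hX hZ a_closed b_open ?_ ?_ ?_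
  · rw [← histr, ← Category.assoc, ha, hs]
  · rw [← histr, ← Category.assoc, hb, Category.assoc, hJ, hzstr]
  · rw [range_eq_preimage_range_of_comp_eq ha, range_eq_preimage_range_of_comp_eq hb, range_zJ,
      hsJ, Set.preimage_compl, compl_compl, Set.preimage_sdiff, sdiff_eq_left,
      Set.disjoint_left]
    exact fun y _ hy => (hiU ▸ Set.mem_range_self y : i y ∈ (J '' U)ᶜ) hy

theorem isReduced_subscheme_vanishingIdeal {P : Scheme.{u}} (Z : TopologicalSpace.Closeds P) :
    IsReduced (Scheme.IdealSheafData.vanishingIdeal Z).subscheme := by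
  let I := Scheme.IdealSheafData.vanishingIdeal Z
  have (U : I.subschemeCover.openCover.I₀) : IsReduced (I.subschemeCover.openCover.X U) :=
    have : _root_.IsReduced (CommRingCat.of (Γ(P, U.1) ⧸ I.ideal U)) :=
      (Ideal.isRadical_iff_quotient_reduced _).1 (PrimeSpectrum.isRadical_vanishingIdeal _)
    inferInstanceAs (IsReduced (Spec (CommRingCat.of (Γ(P, U.1) ⧸ I.ideal U))))
  exact IsReduced.of_openCover _ I.subschemeCover.openCover

/-- The complement of an open subset of a variety, with its reduced scheme structure. -/
def complementVar (P : Variety k) (W : P.toScheme.Opens) : Variety k :=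
  let I := Scheme.IdealSheafData.vanishingIdeal W.compl
  have := P.separated
  have := P.locallyOfFiniteType
  have := P.quasiCompact
  { toScheme := I.subscheme
    str := I.subschemeι ≫ P.str
    reduced := isReduced_subscheme_vanishingIdeal _
    separated := inferInstance
    locallyOfFiniteType := inferInstance
    quasiCompact := inferInstance }

theorem isComplementOf_complementVar (P : Variety k) (W : P.toScheme.Opens) :
    IsComplementOf (complementVar P W) P W :=
  let I := Scheme.IdealSheafData.vanishingIdeal W.compl
  ⟨I.subschemeι, inferInstanceAs (IsClosedImmersion I.subschemeι), rfl, I.range_subschemeι⟩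

theorem dim_le_of_isComplementOf {d : WithBot ℕ∞} {P Z : Variety k} [IrreducibleSpace P.toScheme]
    (hP : P.dim = d + 1) {W : P.toScheme.Opens} (hW : (W : Set P.toScheme).Nonempty)
    (hZ : IsComplementOf Z P W) : Z.dim ≤ d := by
  obtain ⟨i, hi, -, hrange : Set.range i = _⟩ := hZ
  have h : Z.dim + 1 ≤ P.dim := topologicalKrullDim_add_one_le_of_isClosedEmbedding
    i.isClosedEmbedding (hrange ▸ Set.compl_ne_univ.2 hW)
  exact ENat.WithBot.add_le_add_one_right_iff.1 (hP ▸ h)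

end Complement

/-! ## The compactification of `X × 𝔸¹` -/

section Compactification

variable {k : Type u} [Field k]

/-- The variety `X × ℙ¹`. -/
def prodProjLineVar (X : Variety k) : Variety k :=
  have := X.reduced
  have := X.separated
  have := X.locallyOfFiniteType
  have := X.quasiCompact
  { toScheme := prodProjLine X.str
    str := pullback.fst _ _ ≫ X.str
    reduced := isReduced_prodProjLine X.str
    separated := inferInstance
    locallyOfFiniteType := inferInstance
    quasiCompact := inferInstance }

theorem isSmoothVar_prodProjLineVar {X : Variety k} (hX : IsSmoothVar X) :
    IsSmoothVar (prodProjLineVar X) :=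
  have : Smooth X.str := hX
  inferInstanceAs (Smooth (pullback.fst X.str (projSpaceStr (Fin 2) k) ≫ X.str))

theorem isProjectiveVar_prodProjLineVar {X : Variety k} (hX : IsProjectiveVar X) :
    IsProjectiveVar (prodProjLineVar X) :=
  let ⟨_, _, hi, histr⟩ := hX
  exists_isClosedImmersion_prodProjLine hi histr

instance irreducibleSpace_prodProjLineVar (X : Variety k) [IrreducibleSpace X.toScheme] :
    IrreducibleSpace (prodProjLineVar X).toScheme :=
  irreducibleSpace_prodProjLine X.str

theorem dim_prodProjLineVar (X : Variety k) : (prodProjLineVar X).dim = X.dim + 1 :=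
  have := X.locallyOfFiniteType
  topologicalKrullDim_prodProjLine X.str

theorem infinitySection_str (X : Variety k) :
    infinitySection X.str ≫ (prodProjLineVar X).str = X.str := by
  change infinitySection X.str ≫ pullback.fst _ _ ≫ X.str = X.str
  rw [← Category.assoc, infinitySection_fst, Category.id_comp]

theorem exists_iso_pullback_affineLine {X A XA : Variety k} (hA : IsAffLine A)
    (hXA : IsProductOf XA X A) : ∃ e : XA.toScheme ≅ pullback X.str (affineLineStr k),
      e.hom ≫ pullback.fst _ _ ≫ X.str = XA.str := by
  obtain ⟨eA, heA⟩ := hA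
  obtain ⟨e, he⟩ := hXA
  refine ⟨e ≪≫ asIso (pullback.map X.str A.str X.str (affineLineStr k) (𝟙 _) eA.hom (𝟙 _)
    (by simp) (by simpa using heA.symm)), ?_⟩
  rw [Iso.trans_hom, asIso_hom, Category.assoc, pullback.lift_fst_assoc, Category.comp_id, he]

theorem nonempty_of_isProductOf_isAffLine {X A XA : Variety k} [IrreducibleSpace X.toScheme]
    (hA : IsAffLine A) (hXA : IsProductOf XA X A) : Nonempty XA.toScheme := by
  obtain ⟨e, -⟩ := exists_iso_pullback_affineLine hA hXA
  have := irreducibleSpace_pullback_affineLine X.str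
  exact (Scheme.homeoOfIso e).toEquiv.nonempty

theorem exists_isOpenImmersion_prodProjLineVar {X A XA : Variety k} (hA : IsAffLine A)
    (hXA : IsProductOf XA X A) : ∃ J : XA.toScheme ⟶ (prodProjLineVar X).toScheme,
      IsOpenImmersion J ∧ J ≫ (prodProjLineVar X).str = XA.str ∧
        Set.range (infinitySection X.str) = (Set.range J)ᶜ := by
  obtain ⟨e, he⟩ := exists_iso_pullback_affineLine hA hXA
  let J : XA.toScheme ⟶ prodProjLine X.str := e.hom ≫ prodLineChart X.str 0
  have hJ : J ≫ pullback.fst _ _ ≫ X.str = XA.str := by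
    rw [← he, ← prodLineChart_fst X.str 0]
    simp only [J, Category.assoc]
  have range_J : Set.range J = Set.range (prodLineChart X.str 0) := by
    rw [Scheme.Hom.comp_base, TopCat.coe_comp]
    exact (Scheme.homeoOfIso e).surjective.range_comp _
  exact ⟨J, inferInstanceAs (IsOpenImmersion (e.hom ≫ prodLineChart X.str 0)), hJ,
    range_J ▸ range_infinitySection X.str⟩

theorem cls_complement_image_prodProjLineVar {Q : Variety k → Prop} {X T Z Y : Variety k}
    {J : T.toScheme ⟶ (prodProjLineVar X).toScheme} [IsOpenImmersion J]
    (hJ : J ≫ (prodProjLineVar X).str = T.str)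
    (hJ_range : Set.range (infinitySection X.str) = (Set.range J)ᶜ) {U : T.toScheme.Opens}
    (hZU : IsComplementOf Z T U) (hYU : IsComplementOf Y (prodProjLineVar X) (J ''ᵁ U))
    (hY : Q Y) (hX : Q X) (hZ : Q Z) : K0.cls Y hY = K0.cls X hX + K0.cls Z hZ :=
  let s : X.toScheme ⟶ (prodProjLineVar X).toScheme := infinitySection X.str
  have : IsClosedImmersion s := isClosedImmersion_infinitySection X.str
  cls_complement_image (s := s) (infinitySection_str X) hJ hJ_range hZU hYU hY hX hZ

theorem convenientRep_image (hk : ConvenientField k) {n : ℕ} {P P' T T' : Variety k}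
    (hPs : IsSmoothVar P) (hP's : IsSmoothVar P') (hPp : IsProjectiveVar P)
    (hP'p : IsProjectiveVar P') [IrreducibleSpace P.toScheme] [IrreducibleSpace P'.toScheme]
    (hPd : P.dim = n) (hP'd : P'.dim = n)
    {J : T.toScheme ⟶ P.toScheme} {J' : T'.toScheme ⟶ P'.toScheme} [IsOpenImmersion J]
    [IsOpenImmersion J'] (hJ : J ≫ P.str = T.str) (hJ' : J' ≫ P'.str = T'.str)
    {U : T.toScheme.Opens} {V : T'.toScheme.Opens} (hU : (U : Set T.toScheme).Nonempty)
    (hV : (V : Set T'.toScheme).Nonempty) (e : U.toScheme ≅ V.toScheme)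
    (he : e.hom ≫ V.ι ≫ T'.str = U.ι ≫ T.str) : ConvenientRep n P P' (J ''ᵁ U) (J' ''ᵁ V) := by
  refine hk n P P' hPs hP's hPp hP'p ‹_› ‹_› hPd hP'd _ _ ((J ''ᵁ U).isOpen.dense (hU.image J))
    ((J' ''ᵁ V).isOpen.dense (hV.image J')) ((J.isoImage U).symm ≪≫ e ≪≫ J'.isoImage V) ?_
  have hJU : (J.isoImage U).hom ≫ (J ''ᵁ U).ι ≫ P.str = U.ι ≫ T.str := by
    rw [← Category.assoc, Scheme.Hom.isoImage_hom_ι, Category.assoc, hJ]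
  have hJ'V : (J'.isoImage V).hom ≫ (J' ''ᵁ V).ι ≫ P'.str = V.ι ≫ T'.str := by
    rw [← Category.assoc, Scheme.Hom.isoImage_hom_ι, Category.assoc, hJ']
  simp only [Iso.trans_hom, Iso.symm_hom, Category.assoc]
  rw [hJ'V, he, ← hJU, Iso.inv_hom_id_assoc]

end Compactification

/-- Over a convenient field, for smooth projective irreducible
varieties `X, X'` of dimension `n - 1` and a birational isomorphism
`φ : X × 𝔸¹ ⇢ X' × 𝔸¹` represented by `e : U ≅ V`, one has
`[(X' × 𝔸¹) ∖ V] - [(X × 𝔸¹) ∖ U] ≡ [X] - [X']` in `K_0(V_k^{(n-1)})` modulo the image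
of `·L : K_0(V_k^{(n-2)}) → K_0(V_k^{(n-1)})`. -/
theorem class_of_complements_of_birational_after_times_A1 (k : Type u) [Field k]
    (hk : ConvenientField k) (n : ℕ) (hn : 1 ≤ n) (X X' : Variety k)
    (hXs : IsSmoothVar X) (hX's : IsSmoothVar X')
    (hXp : IsProjectiveVar X) (hX'p : IsProjectiveVar X')
    (hXi : IrreducibleSpace X.toScheme) (hX'i : IrreducibleSpace X'.toScheme)
    (hXd : X.dim = ((n - 1 : ℕ) : WithBot ℕ∞))
    (hX'd : X'.dim = ((n - 1 : ℕ) : WithBot ℕ∞))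
    -- `XA = X × 𝔸¹` and `XA' = X' × 𝔸¹`:
    (A XA XA' : Variety k) (hA : IsAffLine A)
    (hXA : IsProductOf XA X A) (hXA' : IsProductOf XA' X' A)
    -- `φ` is represented by the isomorphism `e : U ≅ V`:
    (U : XA.toScheme.Opens) (V : XA'.toScheme.Opens)
    (hU : Dense (U : Set XA.toScheme)) (hV : Dense (V : Set XA'.toScheme))
    (e : U.toScheme ≅ V.toScheme) (he : e.hom ≫ V.ι ≫ XA'.str = U.ι ≫ XA.str)
    -- `ZU` realizes `(X × 𝔸¹) ∖ U` and `ZV` realizes `(X' × 𝔸¹) ∖ V`: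
    (ZU ZV : Variety k) (hZU : IsComplementOf ZU XA U) (hZV : IsComplementOf ZV XA' V)
    (hZUd : ZU.dim ≤ ((n - 1 : ℕ) : WithBot ℕ∞))
    (hZVd : ZV.dim ≤ ((n - 1 : ℕ) : WithBot ℕ∞)) :
    InMulLImage (n - 2) (n - 1)
      ((K0le.cls (n - 1) ZV hZVd - K0le.cls (n - 1) ZU hZUd) -
        (K0le.cls (n - 1) X hXd.le - K0le.cls (n - 1) X' hX'd.le)) := by
  obtain ⟨J, _, hJ, hJ_range⟩ := exists_isOpenImmersion_prodProjLineVar hA hXA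
  obtain ⟨J', _, hJ', hJ'_range⟩ := exists_isOpenImmersion_prodProjLineVar hA hXA'
  have := nonempty_of_isProductOf_isAffLine hA hXA
  have := nonempty_of_isProductOf_isAffLine hA hXA'
  have dim_prod {Y : Variety k} (hY : Y.dim = ((n - 1 : ℕ) : WithBot ℕ∞)) :
      (prodProjLineVar Y).dim = n := by
    rw [dim_prodProjLineVar, hY, ← Nat.cast_add_one, Nat.sub_add_cancel hn]
  have convenient := convenientRep_image hk (isSmoothVar_prodProjLineVar hX's)
    (isSmoothVar_prodProjLineVar hXs) (isProjectiveVar_prodProjLineVar hX'p)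
    (isProjectiveVar_prodProjLineVar hXp) (dim_prod hX'd) (dim_prod hXd) hJ' hJ
    hV.nonempty hU.nonempty e.symm (by rw [← he, Iso.symm_hom, Iso.inv_hom_id_assoc])
  have hY := isComplementOf_complementVar (prodProjLineVar X) (J ''ᵁ U)
  have hY' := isComplementOf_complementVar (prodProjLineVar X') (J' ''ᵁ V)
  have hYd := dim_le_of_isComplementOf (dim_prodProjLineVar X) (hU.nonempty.image J) hY
  have hY'd := dim_le_of_isComplementOf (dim_prodProjLineVar X') (hV.nonempty.image J') hY'
  have key := convenient _ _ (hY'd.trans hX'd.le) (hYd.trans hXd.le) hY' hY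
  rw [cls_complement_image_prodProjLineVar hJ hJ_range hZU hY _ hXd.le hZUd,
    cls_complement_image_prodProjLineVar hJ' hJ'_range hZV hY' _ hX'd.le hZVd] at key
  convert key using 1
  unfold K0le.cls
  abel
end
end

section
/- Let k be a perfect field. Let K_0(V_k^{sm}) denote the free abelian group on isomorphism classes of smooth varieties over k, modulo the relations [X] = Σ_{i∈I} [X_i] for every smooth variety X and every finite family of locally closed embeddings {X_i → X}_{i∈I} with each X_i smooth, the images pairwise disjoint, and the union of the images equal to X. Then the natural homomorphism K_0(V_k^{sm}) → K_0[V_k], sending the class of a smooth variety to its class in the Grothendieck ring, is an isomorphism of abelian groups. -/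
open AlgebraicGeometry CategoryTheory CategoryTheory.Limits

noncomputable section

universe u

open Variety

/-!
A finite partition of a variety into smooth locally closed pieces exists by Noetherian induction,
because over a perfect field a reduced scheme of finite type has a dense smooth locus. Any two such
partitions of `X` have a common refinement, whose pieces need not be smooth but can be partitioned
again; hence the sum of the classes of the pieces in `K_0(V_k^{sm})` depends only on `X`. This sum
is additive along closed subvarieties and so defines the inverse of the natural map. That the
natural map itself is well defined means that `[X] = ∑ [Xᵢ]` in `K_0[V_k]` for every finite
partition: some `Xᵢ` contains a nonempty open `U ⊆ X`, and one cuts along `X ∖ U`.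
-/

section Topology

variable {T ι : Type*} [TopologicalSpace T]

lemma interior_biUnion_eq_empty_of_isClosed (s : Finset ι) {F : ι → Set T}
    (hF : ∀ i ∈ s, IsClosed (F i)) (hF' : ∀ i ∈ s, interior (F i) = ∅) :
    interior (⋃ i ∈ s, F i) = ∅ := by
  classical
  induction s using Finset.induction_on with
  | empty => simp
  | insert i s _ ih =>
    simp only [Finset.forall_mem_insert] at hF hF'
    rw [Finset.set_biUnion_insert,
      interior_union_isClosed_of_interior_empty hF.1 (ih hF.2 hF'.2), hF'.1]

lemma exists_interior_nonempty_of_isLocallyClosed [Finite ι] [Nonempty T] {S : ι → Set T}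
    (hS : ∀ i, IsLocallyClosed (S i)) (hcover : ⋃ i, S i = Set.univ) :
    ∃ i, (interior (S i)).Nonempty := by
  cases nonempty_fintype ι
  obtain ⟨i, hi⟩ : ∃ i, (interior (closure (S i))).Nonempty := by
    by_contra! hempty
    have hinterior := interior_biUnion_eq_empty_of_isClosed Finset.univ
      (fun i _ ↦ isClosed_closure (s := S i)) (fun i _ ↦ hempty i)
    have hclosure : ⋃ i ∈ Finset.univ, closure (S i) = Set.univ := by
      simpa using Set.eq_univ_of_subset (Set.iUnion_mono fun i ↦ subset_closure) hcover
    rw [hclosure, interior_univ] at hinterior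
    exact Set.univ_nonempty.ne_empty hinterior
  refine ⟨i, (dense_coborder (s := S i)).inter_open_nonempty _ isOpen_interior hi |>.mono ?_⟩
  refine interior_maximal ?_ (isOpen_interior.inter (hS i).isOpen_coborder)
  calc interior (closure (S i)) ∩ coborder (S i)
      ⊆ closure (S i) ∩ coborder (S i) := Set.inter_subset_inter_left _ interior_subset
    _ = S i := closure_inter_coborder

end Topology

section Schemes

variable {X Y : Scheme.{u}}

lemma isReduced_subscheme_vanishingIdeal_s13 (C : TopologicalSpace.Closeds X) :
    IsReduced (Scheme.IdealSheafData.vanishingIdeal C).subscheme := by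
  let I := Scheme.IdealSheafData.vanishingIdeal C
  have hquotient (U : X.affineOpens) : _root_.IsReduced (Γ(X, U) ⧸ I.ideal U) := by
    rw [← Ideal.isRadical_iff_quotient_reduced, Scheme.IdealSheafData.vanishingIdeal_ideal]
    exact PrimeSpectrum.isRadical_vanishingIdeal _
  have hchart (U : I.subschemeCover.openCover.I₀) : IsReduced (I.subschemeCover.openCover.X U) :=
    have : _root_.IsReduced (I.subschemeCover.X U) := hquotient U
    inferInstanceAs (IsReduced (Spec (I.subschemeCover.X U)))
  exact IsReduced.of_openCover _ I.subschemeCover.openCover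

lemma isIso_of_isImmersion_of_surjective (f : X ⟶ Y) [IsImmersion f] [Surjective f]
    [IsReduced Y] : IsIso f := by
  have : IsClosedImmersion f := IsClosedImmersion.iff_isPreimmersion.mpr
    ⟨inferInstance, f.surjective.range_eq ▸ isClosed_univ⟩
  exact isIso_of_isClosedImmersion_of_surjective f

end Schemes

namespace Variety

variable {k : Type u} [Field k]

attribute [instance] reduced separated locallyOfFiniteType quasiCompact

instance (X : Variety k) : IsLocallyNoetherian X.toScheme :=
  LocallyOfFiniteType.isLocallyNoetherian X.str

instance (X : Variety k) : CompactSpace X.toScheme :=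
  QuasiCompact.compactSpace_of_compactSpace X.str

instance (X : Variety k) : IsNoetherian X.toScheme where

/-- Isomorphism of varieties over `k`. -/
def Isomorphic (X Y : Variety k) : Prop :=
  ∃ e : X.toScheme ≅ Y.toScheme, e.hom ≫ Y.str = X.str

/-- A locally closed subvariety of `X`, presented by an immersion over `k`. -/
structure Subvariety (X : Variety k) where
  obj : Variety k
  emb : obj.toScheme ⟶ X.toScheme
  [isImmersion : IsImmersion emb]
  emb_str : emb ≫ X.str = obj.str

namespace Subvariety

variable {X Y : Variety k}

attribute [instance] isImmersion

instance : CoeOut (Subvariety X) (Variety k) := ⟨obj⟩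

/-- The locally closed subset of `X` underlying a subvariety. -/
def carrier (Z : Subvariety X) : Set X.toScheme := Set.range Z.emb

lemma isLocallyClosed_carrier (Z : Subvariety X) : IsLocallyClosed Z.carrier :=
  Z.emb.isLocallyClosed_range

/-- A variety isomorphic to `X` over `k`, as a subvariety of `X`. -/
def ofIso (e : Y.toScheme ≅ X.toScheme) (he : e.hom ≫ X.str = Y.str) : Subvariety X where
  obj := Y
  emb := e.hom
  emb_str := he

@[simp]
lemma carrier_ofIso (e : Y.toScheme ≅ X.toScheme) (he : e.hom ≫ X.str = Y.str) :
    (ofIso e he).carrier = Set.univ :=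
  e.hom.surjective.range_eq

/-- `X` as a subvariety of itself. -/
def refl (X : Variety k) : Subvariety X :=
  ofIso (Iso.refl _) (Category.id_comp _)

@[simp]
lemma carrier_refl : (refl X).carrier = Set.univ :=
  carrier_ofIso _ _

/-- An open subset of `X`, as an open subvariety. -/
def ofOpens (U : X.toScheme.Opens) : Subvariety X where
  obj := ⟨U, U.ι ≫ X.str, inferInstance, inferInstance, inferInstance, inferInstance⟩
  emb := U.ι
  emb_str := rfl

@[simp]
lemma carrier_ofOpens (U : X.toScheme.Opens) : (ofOpens U).carrier = U :=
  U.range_ι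

instance (U : X.toScheme.Opens) : IsOpenImmersion (ofOpens U).emb :=
  inferInstanceAs (IsOpenImmersion U.ι)

/-- A closed subset of `X` with its reduced induced structure, as a closed subvariety. -/
def ofCloseds (C : TopologicalSpace.Closeds X.toScheme) : Subvariety X where
  obj :=
    let I := Scheme.IdealSheafData.vanishingIdeal C
    ⟨I.subscheme, I.subschemeι ≫ X.str, isReduced_subscheme_vanishingIdeal_s13 C, inferInstance,
      inferInstance, inferInstance⟩
  emb := (Scheme.IdealSheafData.vanishingIdeal C).subschemeι
  emb_str := rfl

@[simp]
lemma carrier_ofCloseds (C : TopologicalSpace.Closeds X.toScheme) :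
    (ofCloseds C).carrier = C :=
  (Scheme.IdealSheafData.vanishingIdeal C).range_subschemeι.trans
    (Scheme.IdealSheafData.coe_support_vanishingIdeal C)

instance (C : TopologicalSpace.Closeds X.toScheme) : IsClosedImmersion (ofCloseds C).emb :=
  inferInstanceAs (IsClosedImmersion (Scheme.IdealSheafData.vanishingIdeal C).subschemeι)

lemma isClosed_carrier_ofCloseds (C : TopologicalSpace.Closeds X.toScheme) :
    IsClosed (ofCloseds C).carrier :=
  carrier_ofCloseds C ▸ C.isClosed

lemma carrier_ofOpens_eq_compl (U : X.toScheme.Opens) :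
    (ofOpens U).carrier = (ofCloseds U.compl).carrierᶜ := by
  rw [carrier_ofOpens, carrier_ofCloseds, TopologicalSpace.Opens.coe_compl, compl_compl]

/-- A subvariety of a subvariety of `X`, as a subvariety of `X`. -/
def trans (Z : Subvariety X) (W : Subvariety (Z : Variety k)) : Subvariety X where
  obj := W
  emb := W.emb ≫ Z.emb
  emb_str := by rw [Category.assoc, Z.emb_str, W.emb_str]

@[simp]
lemma carrier_trans (Z : Subvariety X) (W : Subvariety (Z : Variety k)) :
    (Z.trans W).carrier = Z.emb '' W.carrier :=
  Set.range_comp Z.emb W.emb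

/-- A locally closed subset `S` of `X` with its reduced induced structure. It is closed in the
open subset `coborder S`. -/
def ofIsLocallyClosed (S : Set X.toScheme) (hS : IsLocallyClosed S) : Subvariety X :=
  let U := ofOpens ⟨coborder S, hS.isOpen_coborder⟩
  U.trans (ofCloseds ⟨U.emb ⁻¹' closure S, isClosed_closure.preimage U.emb.continuous⟩)

@[simp]
lemma carrier_ofIsLocallyClosed (S : Set X.toScheme) (hS : IsLocallyClosed S) :
    (ofIsLocallyClosed S hS).carrier = S := by
  rw [ofIsLocallyClosed, carrier_trans, carrier_ofCloseds, TopologicalSpace.Closeds.coe_mk,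
    Set.image_preimage_eq_range_inter, ← carrier, carrier_ofOpens]
  exact coborder_inter_closure

/-- The preimage of a subvariety of `X` under a morphism `f : Y ⟶ X`, with its reduced induced
structure. -/
def comap (f : Y.toScheme ⟶ X.toScheme) (Z : Subvariety X) : Subvariety Y :=
  ofIsLocallyClosed (f ⁻¹' Z.carrier) (Z.isLocallyClosed_carrier.preimage f.continuous)

@[simp]
lemma carrier_comap (f : Y.toScheme ⟶ X.toScheme) (Z : Subvariety X) :
    (Z.comap f).carrier = f ⁻¹' Z.carrier :=
  carrier_ofIsLocallyClosed _ _

lemma carrier_trans_comap (Z W : Subvariety X) :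
    (Z.trans (W.comap Z.emb)).carrier = Z.carrier ∩ W.carrier := by
  rw [carrier_trans, carrier_comap, Set.image_preimage_eq_range_inter, ← carrier]

-- Both projections of `Z ×_X W` are surjective immersions into reduced schemes.
theorem isomorphic_of_carrier_eq {Z W : Subvariety X} (h : Z.carrier = W.carrier) :
    Isomorphic (Z : Variety k) W := by
  have : Surjective (pullback.fst Z.emb W.emb) := ⟨Set.range_eq_univ.mp <| by
    rw [Scheme.Pullback.range_fst, ← carrier, ← h]
    exact Set.preimage_range _⟩
  have : Surjective (pullback.snd Z.emb W.emb) := ⟨Set.range_eq_univ.mp <| by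
    rw [Scheme.Pullback.range_snd, ← carrier, h]
    exact Set.preimage_range _⟩
  have := isIso_of_isImmersion_of_surjective (pullback.fst Z.emb W.emb)
  have := isIso_of_isImmersion_of_surjective (pullback.snd Z.emb W.emb)
  refine ⟨(asIso (pullback.fst Z.emb W.emb)).symm ≪≫ asIso (pullback.snd Z.emb W.emb), ?_⟩
  simp only [Iso.trans_hom, Iso.symm_hom, asIso_inv, asIso_hom, Category.assoc,
    IsIso.inv_comp_eq]
  rw [← Z.emb_str, ← W.emb_str, pullback.condition_assoc]

lemma isomorphic_comap_comm (Z W : Subvariety X) :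
    Isomorphic (Z.comap W.emb : Variety k) (W.comap Z.emb) :=
  isomorphic_of_carrier_eq (Z := W.trans (Z.comap W.emb)) (W := Z.trans (W.comap Z.emb)) <| by
    rw [carrier_trans_comap, carrier_trans_comap, Set.inter_comm]

end Subvariety

open Subvariety

theorem noetherian_induction {motive : Variety k → Prop}
    (step : ∀ X : Variety k,
      (∀ C : TopologicalSpace.Closeds X.toScheme, C ≠ ⊤ → motive (ofCloseds C)) → motive X)
    (X : Variety k) : motive X := by
  suffices h : ∀ (C : TopologicalSpace.Closeds X.toScheme) (Z : Subvariety X),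
      Z.carrier = C → motive Z from
    h ⊤ (refl X) (by simp)
  intro C
  induction C using WellFoundedLT.induction with
  | ind C ih =>
    intro Z hZ
    refine step Z fun D hD ↦ ?_
    have hrange : IsClosed (Set.range Z.emb) := by
      rw [← carrier, hZ]
      exact C.isClosed
    have hclosed : IsClosed (Z.emb '' D) :=
      (Topology.IsClosedEmbedding.mk Z.emb.isEmbedding hrange).isClosedMap _ D.isClosed
    refine ih ⟨Z.emb '' D, hclosed⟩ ?_ (Z.trans (ofCloseds D)) (by simp)
    rw [← SetLike.coe_ssubset_coe, ← hZ, carrier, ← Set.image_univ]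
    exact Z.emb.isEmbedding.injective.image_strictMono
      (Set.ssubset_univ_iff.mpr fun h ↦ hD (SetLike.coe_injective h))

theorem exists_dense_smooth_opens [PerfectField k] (X : Variety k) :
    ∃ U : X.toScheme.Opens, Dense (U : Set X.toScheme) ∧ IsSmoothVar (ofOpens U : Variety k) := by
  refine ⟨X.str.smoothLocus, X.str.dense_smoothLocus_of_perfectField, ?_⟩
  change Smooth (X.str.smoothLocus.ι ≫ X.str)
  rw [← Scheme.Hom.smoothLocus_eq_top_iff, ← Scheme.Hom.preimage_smoothLocus_eq]
  simp

/-- A partition of `X` into locally closed subvarieties, some of which may be empty. -/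
structure IsPartition {X : Variety k} {ι : Type*} (Z : ι → Subvariety X) : Prop where
  pairwise_disjoint : Pairwise (Function.onFun Disjoint fun i ↦ (Z i).carrier)
  iUnion_carrier : ⋃ i, (Z i).carrier = Set.univ

namespace IsPartition

variable {X Y : Variety k} {ι : Type*} {Z : ι → Subvariety X}

lemma of_unique [Unique ι] (h : (Z default).carrier = Set.univ) : IsPartition Z :=
  ⟨fun _ _ hij ↦ (hij (Subsingleton.elim _ _)).elim, by rw [Set.iUnion, iSup_unique, h]⟩

lemma of_isEmpty [IsEmpty X.toScheme] [IsEmpty ι] : IsPartition Z :=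
  ⟨isEmptyElim, Subsingleton.elim _ _⟩

lemma of_compl {Y U : Subvariety X} (hU : U.carrier = Y.carrierᶜ) :
    IsPartition fun b ↦ cond b Y U where
  pairwise_disjoint := by
    rintro (_ | _) (_ | _) hne
    · exact (hne rfl).elim
    · exact disjoint_compl_left.mono_left hU.le
    · exact disjoint_compl_right.mono_right hU.le
    · exact (hne rfl).elim
  iUnion_carrier := by
    simp only [Set.iUnion, iSup_bool_eq, cond_true, cond_false, hU, sup_compl_eq_top,
      Set.top_eq_univ]

lemma comap (hZ : IsPartition Z) (f : Y.toScheme ⟶ X.toScheme) :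
    IsPartition fun i ↦ (Z i).comap f where
  pairwise_disjoint i j hij := by
    simpa only [Function.onFun, carrier_comap] using (hZ.pairwise_disjoint hij).preimage f
  iUnion_carrier := by
    simp only [carrier_comap, ← Set.preimage_iUnion, hZ.iUnion_carrier, Set.preimage_univ]

lemma sigma {κ : ι → Type*} (hZ : IsPartition Z)
    {W : ∀ i, κ i → Subvariety (Z i : Variety k)} (hW : ∀ i, IsPartition (W i)) :
    IsPartition fun x : Sigma κ ↦ (Z x.1).trans (W x.1 x.2) where
  pairwise_disjoint := by
    rintro ⟨i, a⟩ ⟨j, b⟩ hne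
    simp only [Function.onFun, carrier_trans]
    obtain rfl | hij := eq_or_ne i j
    · exact (Set.disjoint_image_iff (Z i).emb.isEmbedding.injective).mpr
        ((hW i).pairwise_disjoint fun hab ↦ hne (by rw [hab]))
    · exact (hZ.pairwise_disjoint hij).mono (Set.image_subset_range _ _)
        (Set.image_subset_range _ _)
  iUnion_carrier := by
    have hpiece (i : ι) : ⋃ j, ((Z i).trans (W i j)).carrier = (Z i).carrier := by
      simp only [carrier_trans]
      rw [← Set.image_iUnion, (hW i).iUnion_carrier, Set.image_univ, ← carrier]
    rw [Set.iUnion_sigma, Set.iUnion_congr hpiece, hZ.iUnion_carrier]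

end IsPartition

/-- An additive invariant of varieties: a function on isomorphism classes satisfying
`φ X = φ Y + φ (X ∖ Y)` for every closed subvariety `Y` of `X`. -/
structure IsAdditive {A : Type*} [AddCommGroup A] (φ : Variety k → A) : Prop where
  of_isomorphic : ∀ {X Y : Variety k}, Isomorphic X Y → φ X = φ Y
  of_isClosed : ∀ {X : Variety k} {Y U : Subvariety X}, IsClosed Y.carrier →
    U.carrier = Y.carrierᶜ → φ X = φ Y + φ U

namespace IsAdditive

variable {A : Type*} [AddCommGroup A] {φ : Variety k → A} {X : Variety k}

lemma eq_of_carrier_eq_univ (hφ : IsAdditive φ) {Z : Subvariety X}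
    (hZ : Z.carrier = Set.univ) : φ X = φ Z :=
  hφ.of_isomorphic <| isomorphic_of_carrier_eq
    (Z := refl X) (by rw [carrier_refl, hZ])

lemma eq_zero_of_isEmpty (hφ : IsAdditive φ) [IsEmpty X.toScheme] : φ X = 0 := by
  have h : φ X = φ X + φ X := hφ.of_isClosed (Y := refl X) (U := refl X)
    (carrier_refl (X := X) ▸ isClosed_univ) (Subsingleton.elim _ _)
  exact left_eq_add.mp h

lemma eq_comap_add_comap (hφ : IsAdditive φ) (Z : Subvariety X) {Y U : Subvariety X}
    (hY : IsClosed Y.carrier) (hU : U.carrier = Y.carrierᶜ) :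
    φ Z = φ (Z.comap Y.emb) + φ (Z.comap U.emb) := by
  rw [hφ.of_isomorphic (isomorphic_comap_comm Z Y), hφ.of_isomorphic (isomorphic_comap_comm Z U)]
  refine hφ.of_isClosed ?_ ?_
  · rw [carrier_comap]
    exact hY.preimage Z.emb.continuous
  · rw [carrier_comap, carrier_comap, hU, Set.preimage_compl]

lemma eq_sum_of_carrier_eq_univ (hφ : IsAdditive φ) {ι : Type*} [Fintype ι]
    {Z : ι → Subvariety X} (hZ : IsPartition Z) {i : ι} (hi : (Z i).carrier = Set.univ) :
    φ X = ∑ j, φ (Z j) := by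
  rw [Fintype.sum_eq_single i, ← hφ.eq_of_carrier_eq_univ hi]
  intro j hj
  have hempty : (Z j).carrier = ∅ :=
    Set.disjoint_univ.mp (hi ▸ hZ.pairwise_disjoint hj)
  have : IsEmpty (Z j).obj.toScheme := Set.range_eq_empty_iff.mp hempty
  exact hφ.eq_zero_of_isEmpty

theorem eq_sum (hφ : IsAdditive φ) {ι : Type*} [Fintype ι] {Z : ι → Subvariety X}
    (hZ : IsPartition Z) : φ X = ∑ i, φ (Z i) := by
  induction X using noetherian_induction with
  | step X ih =>
    cases isEmpty_or_nonempty X.toScheme with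
    | inl _ =>
      have (i : ι) : IsEmpty (Z i).obj.toScheme := Function.isEmpty (Z i).emb
      simp only [hφ.eq_zero_of_isEmpty, Finset.sum_const_zero]
    | inr _ =>
      obtain ⟨i, hi⟩ := exists_interior_nonempty_of_isLocallyClosed
        (fun i ↦ (Z i).isLocallyClosed_carrier) hZ.iUnion_carrier
      let U : X.toScheme.Opens := ⟨interior (Z i).carrier, isOpen_interior⟩
      let C : TopologicalSpace.Closeds X.toScheme := U.compl
      have hC : C ≠ ⊤ := fun h ↦ hi.ne_empty <|
        Set.compl_univ_iff.mp (congrArg SetLike.coe h)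
      have hclosed : IsClosed (ofCloseds C).carrier := isClosed_carrier_ofCloseds C
      have hcompl : (ofOpens U).carrier = (ofCloseds C).carrierᶜ := carrier_ofOpens_eq_compl U
      have hU : ((Z i).comap (ofOpens U).emb).carrier = Set.univ := by
        rw [carrier_comap, Set.preimage_eq_univ_iff, ← carrier, carrier_ofOpens]
        exact interior_subset
      calc φ X = φ (ofCloseds C) + φ (ofOpens U) := hφ.of_isClosed hclosed hcompl
        _ = ∑ j, φ ((Z j).comap (ofCloseds C).emb) + ∑ j, φ ((Z j).comap (ofOpens U).emb) := by
          rw [ih C hC (hZ.comap _), hφ.eq_sum_of_carrier_eq_univ (hZ.comap _) hU]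
        _ = ∑ j, φ (Z j) := by
          rw [← Finset.sum_add_distrib]
          exact Fintype.sum_congr _ _ fun j ↦ (hφ.eq_comap_add_comap (Z j) hclosed hcompl).symm

end IsAdditive

namespace K0Var

variable {A : Type*} [AddCommGroup A] {φ : Variety k → A}

lemma cls_eq_of_isomorphic {X Y : Variety k} (h : Isomorphic X Y) : cls X = cls Y :=
  QuotientAddGroup.eq_iff_sub_mem.mpr <| AddSubgroup.subset_closure <|
    Or.inl ⟨⟨X, trivial⟩, ⟨Y, trivial⟩, h, rfl⟩

lemma isAdditive_cls : IsAdditive (cls (k := k)) where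
  of_isomorphic := cls_eq_of_isomorphic
  of_isClosed {X Y U} hY hU := by
    let C : TopologicalSpace.Closeds X.toScheme := ⟨Y.carrier, hY⟩
    have hYC : Isomorphic (Y : Variety k) (ofCloseds C) :=
      isomorphic_of_carrier_eq (carrier_ofCloseds C).symm
    have hUC : Isomorphic (U : Variety k) (ofOpens C.compl) :=
      isomorphic_of_carrier_eq (hU.trans (carrier_ofOpens C.compl).symm)
    rw [cls_eq_of_isomorphic hYC, cls_eq_of_isomorphic hUC]
    refine QuotientAddGroup.eq_iff_sub_mem.mpr <| AddSubgroup.subset_closure <|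
      Or.inr ⟨⟨X, trivial⟩, ⟨ofCloseds C, trivial⟩, ⟨ofOpens C.compl, trivial⟩, (ofCloseds C).emb,
        (ofOpens C.compl).emb, inferInstance, inferInstance, (ofCloseds C).emb_str,
        (ofOpens C.compl).emb_str, ?_, (sub_sub _ _ _).symm⟩
    exact (carrier_ofOpens C.compl).trans (congrArg compl (carrier_ofCloseds C)).symm

/-- The homomorphism out of `K_0[V_k]` induced by an additive invariant. -/
def lift (φ : Variety k → A) (hφ : IsAdditive φ) : K0Var k →+ A :=
  QuotientAddGroup.lift _ (FreeAbelianGroup.lift fun V ↦ φ V.1) <| by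
    rw [AddSubgroup.closure_le]
    rintro _ (⟨X, Y, h, rfl⟩ | ⟨X, Y, U, i, j, hi, hj, hi', hj', hij, rfl⟩)
    · simp only [SetLike.mem_coe, AddMonoidHom.mem_ker, map_sub, FreeAbelianGroup.lift_apply_of]
      rw [hφ.of_isomorphic h, sub_self]
    · simp only [SetLike.mem_coe, AddMonoidHom.mem_ker, map_sub, FreeAbelianGroup.lift_apply_of]
      rw [hφ.of_isClosed (Y := ⟨Y.1, i, hi'⟩) (U := ⟨U.1, j, hj'⟩)
        i.isClosedEmbedding.isClosed_range hij, add_sub_cancel_left, sub_self]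

lemma lift_cls (hφ : IsAdditive φ) (X : Variety k) : lift φ hφ (cls X) = φ X :=
  FreeAbelianGroup.lift_apply_of _ _

lemma hom_ext {f g : K0Var k →+ A} (h : ∀ X, f (cls X) = g (cls X)) : f = g :=
  QuotientAddGroup.addMonoidHom_ext _ <| FreeAbelianGroup.lift_ext _ _ fun X ↦ h X.1

end K0Var

namespace K0sm

variable {A : Type*} [AddCommGroup A] {φ : Variety k → A}

lemma cls_eq_sum {X : Variety k} (hX : IsSmoothVar X) {ι : Type*} [Fintype ι]
    {Z : ι → Subvariety X} (hZ : IsPartition Z) (hZ' : ∀ i, IsSmoothVar (Z i : Variety k)) :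
    cls X hX = ∑ i, cls (Z i) (hZ' i) := by
  let e := (Fintype.equivFin ι).symm
  let P (i : ι) : {V : Variety k // IsSmoothVar V} := ⟨Z i, hZ' i⟩
  have hsum : ∑ i, cls (Z i) (hZ' i) =
      QuotientAddGroup.mk' (AddSubgroup.closure (smCutRel k))
        (∑ i, FreeAbelianGroup.of (P (e i))) := by
    rw [map_sum, ← Equiv.sum_comp e]
    rfl
  rw [hsum]
  refine QuotientAddGroup.eq_iff_sub_mem.mpr <| AddSubgroup.subset_closure
    ⟨⟨X, hX⟩, _, P ∘ e, fun i ↦ (Z (e i)).emb, fun i ↦ (Z (e i)).isImmersion,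
      fun i ↦ (Z (e i)).emb_str, fun i j hij ↦ hZ.pairwise_disjoint (e.injective.ne hij), ?_, rfl⟩
  exact (e.surjective.iUnion_comp fun i ↦ (Z i).carrier).trans hZ.iUnion_carrier

/-- The homomorphism out of `K_0(V_k^{sm})` induced by an additive invariant. -/
def lift (φ : Variety k → A) (hφ : IsAdditive φ) : K0sm k →+ A :=
  QuotientAddGroup.lift _ (FreeAbelianGroup.lift fun V ↦ φ V.1) <| by
    rw [AddSubgroup.closure_le]
    rintro _ ⟨X, m, P, f, _, hstr, hdisj, hunion, rfl⟩
    let Z (i : Fin m) : Subvariety X.1 := ⟨(P i).1, f i, hstr i⟩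
    have hZ : IsPartition Z := ⟨hdisj, hunion⟩
    simp only [SetLike.mem_coe, AddMonoidHom.mem_ker, map_sub, map_sum,
      FreeAbelianGroup.lift_apply_of]
    rw [hφ.eq_sum hZ, sub_self]

lemma lift_cls (hφ : IsAdditive φ) (X : Variety k) (hX : IsSmoothVar X) :
    lift φ hφ (cls X hX) = φ X :=
  FreeAbelianGroup.lift_apply_of _ _

lemma hom_ext {f g : K0sm k →+ A} (h : ∀ X hX, f (cls X hX) = g (cls X hX)) : f = g :=
  QuotientAddGroup.addMonoidHom_ext _ <| FreeAbelianGroup.lift_ext _ _ fun X ↦ h X.1 X.2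

end K0sm

/-- `a` is the sum of the classes of the pieces of a finite partition of `X` into smooth
subvarieties. -/
def HasSmoothClass (X : Variety k) (a : K0sm k) : Prop :=
  ∃ (ι : Type) (_ : Fintype ι) (Z : ι → Subvariety X) (hZ : ∀ i, IsSmoothVar (Z i : Variety k)),
    IsPartition Z ∧ a = ∑ i, K0sm.cls (Z i) (hZ i)

namespace HasSmoothClass

variable {X Y : Variety k} {a b : K0sm k}

lemma sum {ι : Type} [Fintype ι] {Z : ι → Subvariety X} (hZ : IsPartition Z) {a : ι → K0sm k}
    (ha : ∀ i, HasSmoothClass (Z i) (a i)) : HasSmoothClass X (∑ i, a i) := by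
  choose κ _ W hW hWpart hsum using ha
  refine ⟨Sigma κ, inferInstance, _, fun x ↦ hW x.1 x.2, hZ.sigma hWpart, ?_⟩
  rw [Fintype.sum_sigma]
  exact Fintype.sum_congr _ _ hsum

lemma of_isomorphic (ha : HasSmoothClass X a) (h : Isomorphic X Y) : HasSmoothClass Y a := by
  obtain ⟨e, he⟩ := h
  have hpart : IsPartition fun _ : Unit ↦ ofIso e he := .of_unique (carrier_ofIso e he)
  simpa using sum hpart (a := fun _ ↦ a) fun _ ↦ ha

lemma add {Z U : Subvariety X} (hU : U.carrier = Z.carrierᶜ) (ha : HasSmoothClass Z a)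
    (hb : HasSmoothClass U b) : HasSmoothClass X (a + b) := by
  have h := sum (IsPartition.of_compl hU) (a := fun i ↦ cond i a b)
    (Bool.forall_bool.mpr ⟨hb, ha⟩)
  rwa [Fintype.sum_bool] at h

lemma of_smooth (hX : IsSmoothVar X) : HasSmoothClass X (K0sm.cls X hX) :=
  ⟨Unit, inferInstance, fun _ ↦ refl X, fun _ ↦ hX, .of_unique carrier_refl,
    by rw [Fintype.sum_unique]; rfl⟩

lemma eq_cls (ha : HasSmoothClass X a) (hX : IsSmoothVar X) : a = K0sm.cls X hX := by
  obtain ⟨ι, _, Z, hZ, hpart, rfl⟩ := ha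
  exact (K0sm.cls_eq_sum hX hpart hZ).symm

lemma of_isEmpty [IsEmpty X.toScheme] : HasSmoothClass X 0 :=
  ⟨Empty, inferInstance, Empty.elim, Empty.rec, .of_isEmpty, rfl⟩

lemma lift_eq {A : Type*} [AddCommGroup A] {φ : Variety k → A} (hφ : IsAdditive φ)
    (ha : HasSmoothClass X a) : K0sm.lift φ hφ a = φ X := by
  obtain ⟨ι, _, Z, hZ, hpart, rfl⟩ := ha
  simp only [map_sum, K0sm.lift_cls]
  exact (hφ.eq_sum hpart).symm

end HasSmoothClass

variable [PerfectField k]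

theorem exists_hasSmoothClass (X : Variety k) : ∃ a, HasSmoothClass X a := by
  induction X using noetherian_induction with
  | step X ih =>
    cases isEmpty_or_nonempty X.toScheme with
    | inl _ => exact ⟨0, .of_isEmpty⟩
    | inr _ =>
      obtain ⟨U, hdense, hsmooth⟩ := exists_dense_smooth_opens X
      have hC : U.compl ≠ ⊤ := fun h ↦ hdense.nonempty.ne_empty <|
        Set.compl_univ_iff.mp (congrArg SetLike.coe h)
      obtain ⟨a, ha⟩ := ih U.compl hC
      exact ⟨_, .add (carrier_ofOpens_eq_compl U) ha (.of_smooth hsmooth)⟩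

theorem HasSmoothClass.unique {X : Variety k} {a b : K0sm k} (ha : HasSmoothClass X a)
    (hb : HasSmoothClass X b) : a = b := by
  obtain ⟨ι, _, Z, hZ, hZpart, rfl⟩ := ha
  obtain ⟨κ, _, W, hW, hWpart, rfl⟩ := hb
  choose c hc using fun i j ↦ exists_hasSmoothClass ((W j).comap (Z i).emb : Variety k)
  have hrow (i : ι) : ∑ j, c i j = K0sm.cls (Z i) (hZ i) :=
    (HasSmoothClass.sum (hWpart.comap (Z i).emb) (hc i)).eq_cls (hZ i)
  have hcol (j : κ) : ∑ i, c i j = K0sm.cls (W j) (hW j) :=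
    (HasSmoothClass.sum (hZpart.comap (W j).emb) fun i ↦
      (hc i j).of_isomorphic (isomorphic_comap_comm (W j) (Z i))).eq_cls (hW j)
  simp only [← hrow, ← hcol]
  exact Finset.sum_comm

/-- The class in `K_0(V_k^{sm})` of a possibly singular variety: the common value of the sums of
classes over its finite smooth partitions. -/
def smoothClass (X : Variety k) : K0sm k :=
  (exists_hasSmoothClass X).choose

lemma hasSmoothClass_smoothClass (X : Variety k) : HasSmoothClass X (smoothClass X) :=
  (exists_hasSmoothClass X).choose_spec

lemma smoothClass_eq_cls {X : Variety k} (hX : IsSmoothVar X) : smoothClass X = K0sm.cls X hX :=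
  (hasSmoothClass_smoothClass X).eq_cls hX

lemma isAdditive_smoothClass : IsAdditive (smoothClass (k := k)) where
  of_isomorphic {X Y} h :=
    ((hasSmoothClass_smoothClass X).of_isomorphic h).unique (hasSmoothClass_smoothClass Y)
  of_isClosed {X Y U} _ hU := (hasSmoothClass_smoothClass X).unique <|
    .add hU (hasSmoothClass_smoothClass Y.obj) (hasSmoothClass_smoothClass U.obj)

end Variety

/-- Over a perfect field, the natural homomorphism
`K_0(V_k^{sm}) → K_0[V_k]` is an isomorphism of abelian groups. -/
theorem K0sm_iso_K0Var (k : Type u) [Field k] [PerfectField k] :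
    ∃ f : K0sm k →+ K0Var k,
      (∀ (V : Variety k) (hV : IsSmoothVar V), f (K0sm.cls V hV) = K0Var.cls V) ∧
      Function.Bijective f := by
  let f : K0sm k →+ K0Var k := K0sm.lift K0Var.cls K0Var.isAdditive_cls
  let g : K0Var k →+ K0sm k := K0Var.lift smoothClass isAdditive_smoothClass
  have hgf : g.comp f = .id _ := K0sm.hom_ext fun V hV ↦ by
    change g (f (K0sm.cls V hV)) = K0sm.cls V hV
    rw [K0sm.lift_cls, K0Var.lift_cls, smoothClass_eq_cls hV]
  have hfg : f.comp g = .id _ := K0Var.hom_ext fun V ↦ by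
    change f (g (K0Var.cls V)) = K0Var.cls V
    rw [K0Var.lift_cls, (hasSmoothClass_smoothClass V).lift_eq]
  exact ⟨f, K0sm.lift_cls _, Function.bijective_iff_has_inverse.mpr
    ⟨g, DFunLike.congr_fun hgf, DFunLike.congr_fun hfg⟩⟩
end
end
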